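/- arXiv:1803.11436 — 4 statements merged into one kernel-verified Lean document; each statement's English description precedes it below -/
import Mathlib

section
/- Let n ≥ 5 and let P = {p_0, …, p_{n−1}} be n distinct points on the unit circle listed in counterclockwise cyclic order. Let τ be any triangulation of P and let d ∈ τ be a diagonal of minimal length in τ, i.e. ‖d‖ ≤ ‖d'‖ for every diagonal d' ∈ τ. Then d is an ear, i.e. d = {i−1, i+1} for some index i. -/
/-!
A diagonal `d = {a, b}` of a point set on a circle cuts the circle into two arcs, one of which,
say the one from `a` to `b`, has angle at most `π`. Every chord with both endpoints on that arc,
other than `d`, is strictly shorter than `d` (`len_lt_of_arc_lt`). So it suffices that, unless `d`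
cuts off a single vertex on that side, `τ` has another diagonal on that side (`exists_inner`).

That is the maximality of a family of `n - 3` non-crossing diagonals. Counting vertices
from `a`, diagonals become pairs `x < y` in `{0, …, n - 1}`, and `d = (0, m)`. If `m ≥ 3` and no
other diagonal lies within `[0, m]`, then adding `(1, m)` and the polygon side `(0, n - 1)` keeps
the family non-crossing and brings its size to `n - 1`. But a non-crossing family of intervals of
length at least `2` in `[0, n - 1]` has at most `n - 2` members (`card_le_of_noncross`): each
interval has an interior point lying in the interior of no smaller member, and these points are
distinct.
-/


/-- The point on the unit circle of `ℝ²` at angle `θ`. -/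
noncomputable def pt (θ : ℝ) : EuclideanSpace ℝ (Fin 2) :=
  (WithLp.equiv 2 (Fin 2 → ℝ)).symm ![Real.cos θ, Real.sin θ]

variable {n : ℕ} [NeZero n]

/-- `k` lies strictly between `i` and `j` in counterclockwise cyclic order. -/
def CcwBtw (i k j : ZMod n) : Prop :=
  0 < (k - i).val ∧ (k - i).val < (j - i).val

/-- `d` is a diagonal of the convex polygon on indices `ZMod n`. -/
def IsDiag (d : Sym2 (ZMod n)) : Prop :=
  ∃ i j : ZMod n, d = s(i, j) ∧ j ≠ i - 1 ∧ j ≠ i ∧ j ≠ i + 1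

/-- `d` is a chord, i.e. a pair of cyclically consecutive indices. -/
def IsChord (d : Sym2 (ZMod n)) : Prop :=
  ∃ i : ZMod n, d = s(i, i + 1)

/-- Two diagonals `{i, j}` and `{k, l}` cross if exactly one of `k`, `l` lies
strictly between `i` and `j` in cyclic order (equivalently, one of them lies
strictly in the arc from `i` to `j` and the other strictly in the arc from `j`
to `i`). -/
def Crosses (d e : Sym2 (ZMod n)) : Prop :=
  ∃ i j k l : ZMod n, d = s(i, j) ∧ e = s(k, l) ∧ CcwBtw i k j ∧ CcwBtw j l i

/-- A triangulation: `n - 3` pairwise non-crossing diagonals. -/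
def IsTriangulation (τ : Finset (Sym2 (ZMod n))) : Prop :=
  τ.card = n - 3 ∧ (∀ d ∈ τ, IsDiag d) ∧ ∀ d ∈ τ, ∀ e ∈ τ, ¬ Crosses d e

/-- The length of the segment joining the two points indexed by `d`. -/
noncomputable def len (p : ZMod n → EuclideanSpace ℝ (Fin 2)) (d : Sym2 (ZMod n)) : ℝ :=
  Sym2.lift ⟨fun i j => ‖p i - p j‖, fun _ _ => norm_sub_rev _ _⟩ d

/-- `D(τ)`: the lengths of the diagonals of `τ` sorted in nondecreasing order. -/
noncomputable def sortedLengths (p : ZMod n → EuclideanSpace ℝ (Fin 2))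
    (τ : Finset (Sym2 (ZMod n))) : List ℝ :=
  (τ.val.map (len p)).sort (· ≤ ·)

/-- Lexicographic order on lists of reals. -/
def lexLE (l l' : List ℝ) : Prop := l = l' ∨ List.Lex (· < ·) l l'

/-- `τ` is length maximal: it is a triangulation whose sorted list of diagonal
lengths is greatest in the lexicographic order among all triangulations. -/
def LengthMaximal (p : ZMod n → EuclideanSpace ℝ (Fin 2))
    (τ : Finset (Sym2 (ZMod n))) : Prop :=
  IsTriangulation τ ∧
    ∀ τ' : Finset (Sym2 (ZMod n)), IsTriangulation τ' →
      lexLE (sortedLengths p τ') (sortedLengths p τ)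

/-- A side of a triangle of `τ`: a chord, or a diagonal belonging to `τ`. -/
def IsSide (τ : Finset (Sym2 (ZMod n))) (d : Sym2 (ZMod n)) : Prop :=
  IsChord d ∨ d ∈ τ

open scoped Classical in
/-- `A(τ)`: the `3(n-2)` angles of the triangles of `τ` sorted in nondecreasing
order.  Triangles are recorded as triples `a < b < c` (ordered by residue) all of
whose sides are chords or diagonals of `τ`, each contributing its three angles. -/
noncomputable def sortedAngles (p : ZMod n → EuclideanSpace ℝ (Fin 2))
    (τ : Finset (Sym2 (ZMod n))) : List ℝ :=
  ((Finset.univ.filter fun x : ZMod n × ZMod n × ZMod n =>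
      x.1.val < x.2.1.val ∧ x.2.1.val < x.2.2.val ∧
      IsSide τ s(x.1, x.2.1) ∧ IsSide τ s(x.2.1, x.2.2) ∧ IsSide τ s(x.1, x.2.2)).val.bind
    fun x =>
      {EuclideanGeometry.angle (p x.2.1) (p x.1) (p x.2.2),
       EuclideanGeometry.angle (p x.1) (p x.2.1) (p x.2.2),
       EuclideanGeometry.angle (p x.1) (p x.2.2) (p x.2.1)}).sort (· ≤ ·)

/-- `τ` is angle maximal: it is a triangulation whose sorted list of angles is
greatest in the lexicographic order among all triangulations. -/
def AngleMaximal (p : ZMod n → EuclideanSpace ℝ (Fin 2))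
    (τ : Finset (Sym2 (ZMod n))) : Prop :=
  IsTriangulation τ ∧
    ∀ τ' : Finset (Sym2 (ZMod n)), IsTriangulation τ' →
      lexLE (sortedAngles p τ') (sortedAngles p τ)

/-- The ear `e_i = {i-1, i+1}`. -/
def ear (i : ZMod n) : Sym2 (ZMod n) := s(i - 1, i + 1)

/-- `P` contains a symmetric quadruple: indices `i < j < k < l` with
`‖p i - p k‖ = ‖p j - p l‖`. -/
def HasSymQuad (p : ZMod n → EuclideanSpace ℝ (Fin 2)) : Prop :=
  ∃ i j k l : ZMod n, i.val < j.val ∧ j.val < k.val ∧ k.val < l.val ∧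
    ‖p i - p k‖ = ‖p j - p l‖

/-- For every member of a non-crossing family, there is an interior point that is interior to no
other member contained in it: the largest `z < y` with `z = x + 1` or `(x, z)` in the family. -/
lemma exists_apex (S : Finset (ℕ × ℕ)) (hlen : ∀ s ∈ S, s.1 + 2 ≤ s.2)
    (hnc : ∀ s ∈ S, ∀ t ∈ S, ¬ (s.1 < t.1 ∧ t.1 < s.2 ∧ s.2 < t.2))
    (s : ℕ × ℕ) (hs : s ∈ S) :
    ∃ z, s.1 < z ∧ z < s.2 ∧
      ∀ t ∈ S, s.1 ≤ t.1 → t.2 ≤ s.2 → t ≠ s → ¬ (t.1 < z ∧ z < t.2) := by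
  classical
  have hl := hlen s hs
  let T := (Finset.range s.2).filter fun z => z = s.1 + 1 ∨ (s.1, z) ∈ S
  have hT : T.Nonempty := ⟨s.1 + 1, by simp [T]; omega⟩
  obtain ⟨z, hmem, hmax⟩ : ∃ z ∈ T, ∀ w ∈ T, w ≤ z := ⟨_, T.max'_mem hT, T.le_max'⟩
  simp only [T, Finset.mem_filter, Finset.mem_range] at hmem hmax
  have hz1 : s.1 < z := by
    rcases hmem.2 with h | h
    · omega
    · have := hlen _ h
      simp only at this
      omega
  refine ⟨z, hz1, hmem.1, ?_⟩
  rintro ⟨t1, t2⟩ ht h1 h2 hne ⟨h3, h4⟩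
  simp only at h1 h2 h3 h4
  have hx : t1 = s.1 := by
    rcases hmem.2 with h | h
    · omega
    · by_contra hc
      exact hnc _ h _ ht ⟨by simp only; omega, h3, h4⟩
  subst hx
  have hy : t2 ≠ s.2 := fun h => hne (Prod.ext rfl h)
  have := hmax t2 ⟨by omega, Or.inr ht⟩
  omega

lemma card_le_of_noncross (N : ℕ) (S : Finset (ℕ × ℕ)) (hlen : ∀ s ∈ S, s.1 + 2 ≤ s.2)
    (hN : ∀ s ∈ S, s.2 ≤ N)
    (hnc : ∀ s ∈ S, ∀ t ∈ S, ¬ (s.1 < t.1 ∧ t.1 < s.2 ∧ s.2 < t.2)) :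
    S.card ≤ N - 1 := by
  classical
  choose! f hf1 hf2 hf3 using exists_apex S hlen hnc
  have : S.card ≤ (Finset.Ioo 0 N).card := by
    refine Finset.card_le_card_of_injOn f ?_ ?_
    · intro s hs
      have := hf1 s hs
      have := hf2 s hs
      have := hN s hs
      simp only [Finset.coe_Ioo, Set.mem_Ioo]
      omega
    · intro s hs t ht hst
      by_contra hne
      have a1 := hf1 s hs
      have a2 := hf2 s hs
      have b1 := hf1 t ht
      have b2 := hf2 t ht
      have c1 := hnc s hs t ht
      have c2 := hnc t ht s hs
      have hst' : f s = f t := hst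
      -- Two non-crossing intervals with a common interior point are nested.
      by_cases h : s.1 ≤ t.1 ∧ t.2 ≤ s.2
      · exact hf3 s hs t ht h.1 h.2 (Ne.symm hne) ⟨by omega, by omega⟩
      · exact hf3 t ht s hs (by omega) (by omega) hne ⟨by omega, by omega⟩
  simpa using this

lemma val_sub_eq {n : ℕ} [NeZero n] (x a : ZMod n) :
    (x - a).val = if a.val ≤ x.val then x.val - a.val else n + x.val - a.val := by
  split_ifs with h
  · exact ZMod.val_sub h
  · have h1 : (a - x).val = a.val - x.val := ZMod.val_sub (by omega)
    have h2 : x - a = -(a - x) := by ring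
    have h3 : a - x ≠ 0 := by
      intro h0
      rw [h0, ZMod.val_zero] at h1
      omega
    have : NeZero (a - x) := ⟨h3⟩
    have := ZMod.val_lt a
    rw [h2, ZMod.val_neg_of_ne_zero, h1]
    omega

lemma IsDiag.ne {n : ℕ} [NeZero n] {i j : ZMod n} (h : IsDiag s(i, j)) :
    i ≠ j ∧ j ≠ i + 1 ∧ i ≠ j + 1 := by
  obtain ⟨k, l, he, h1, h2, h3⟩ := h
  rcases Sym2.eq_iff.1 he with ⟨rfl, rfl⟩ | ⟨rfl, rfl⟩
  · exact ⟨Ne.symm h2, h3, fun h => h1 (by rw [h]; ring)⟩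
  · exact ⟨h2, fun h => h1 (by rw [h]; ring), h3⟩

/-- If a diagonal `{a, b}` of a triangulation has at least two vertices strictly between `a` and
`b`, the triangulation has another diagonal with both endpoints on the arc from `a` to `b`. -/
lemma exists_inner {n : ℕ} [NeZero n] (hn : 5 ≤ n) (τ : Finset (Sym2 (ZMod n)))
    (hτ : IsTriangulation τ) (a b : ZMod n) (hd : s(a, b) ∈ τ) (hm : 3 ≤ (b - a).val) :
    ∃ k l : ZMod n, s(k, l) ∈ τ ∧ (k - a).val < (l - a).val ∧ (l - a).val ≤ (b - a).val ∧
      (0 < (k - a).val ∨ (l - a).val < (b - a).val) := by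
  classical
  obtain ⟨hcard, hdiag, hnc⟩ := hτ
  by_contra hcon
  push Not at hcon
  have hcast : ∀ x, x < n → (a + (x : ZMod n) - a).val = x := by
    intro x hx
    rw [add_sub_cancel_left, ZMod.val_natCast, Nat.mod_eq_of_lt hx]
  have hback : ∀ i : ZMod n, a + ((i - a).val : ZMod n) = i := by
    intro i
    rw [ZMod.natCast_zmod_val]
    ring
  set m := (b - a).val with hmdef
  have hmn : m < n := ZMod.val_lt _
  -- `F` is the triangulation in the coordinate that counts vertices from `a`.
  let F : Finset (ℕ × ℕ) := (Finset.range n ×ˢ Finset.range n).filter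
    fun s => s.1 < s.2 ∧ s((a + s.1 : ZMod n), (a + s.2 : ZMod n)) ∈ τ
  have hF : ∀ x y, (x, y) ∈ F ↔ x < n ∧ y < n ∧ x < y ∧
      s((a + x : ZMod n), (a + y : ZMod n)) ∈ τ := by
    intro x y
    simp [F, and_assoc]
  have hFcard : n - 3 ≤ F.card := by
    rw [← hcard]
    refine Finset.card_le_card_of_surjOn
      (fun s : ℕ × ℕ => s((a + s.1 : ZMod n), (a + s.2 : ZMod n))) ?_
    intro e
    induction e using Sym2.ind with
    | _ i j =>
      intro he
      have hij := (hdiag _ he).ne.1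
      have hv : (i - a).val ≠ (j - a).val := by
        intro h
        apply hij
        rw [← hback i, h, hback j]
      rcases lt_or_gt_of_ne hv with h | h
      · refine ⟨((i - a).val, (j - a).val), ?_, ?_⟩
        · rw [Finset.mem_coe, hF, hback, hback]
          exact ⟨ZMod.val_lt _, ZMod.val_lt _, h, he⟩
        · simp only [hback]
      · refine ⟨((j - a).val, (i - a).val), ?_, ?_⟩
        · rw [Finset.mem_coe, hF, hback, hback, Sym2.eq_swap]
          exact ⟨ZMod.val_lt _, ZMod.val_lt _, h, he⟩
        · simp only [hback]
          exact Sym2.eq_swap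
  have hFlen : ∀ x y, (x, y) ∈ F → x + 2 ≤ y ∧ y ≤ n - 1 ∧ ¬ (x = 0 ∧ y = n - 1) := by
    intro x y h
    obtain ⟨hx, hy, hxy, he⟩ := (hF x y).1 h
    obtain ⟨-, h2, h3⟩ := (hdiag _ he).ne
    refine ⟨?_, by omega, ?_⟩
    · by_contra hc
      apply h2
      have : y = x + 1 := by omega
      rw [this]
      push_cast
      ring
    · rintro ⟨h0, h1⟩
      apply h3
      have : ((y + 1 : ℕ) : ZMod n) = 0 := by
        rw [show y + 1 = n by omega, ZMod.natCast_self]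
      push_cast at this
      rw [h0, add_assoc, this]
      simp
  have hFnc : ∀ x y x' y', (x, y) ∈ F → (x', y') ∈ F → ¬ (x < x' ∧ x' < y ∧ y < y') := by
    rintro x y x' y' h h' ⟨h1, h2, h3⟩
    obtain ⟨hx, hy, hxy, he⟩ := (hF x y).1 h
    obtain ⟨hx', hy', hxy', he'⟩ := (hF x' y').1 h'
    have hsub : ∀ u v : ℕ, u < n → v < n → ((a + v : ZMod n) - (a + u : ZMod n)).val =
        if u ≤ v then v - u else n + v - u := by
      intro u v hu hv
      have := val_sub_eq (v : ZMod n) (u : ZMod n)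
      rw [ZMod.val_natCast, ZMod.val_natCast, Nat.mod_eq_of_lt hu, Nat.mod_eq_of_lt hv] at this
      rw [← this]
      congr 1
      ring
    refine hnc _ he _ he' ⟨_, _, _, _, rfl, rfl, ?_, ?_⟩
    · unfold CcwBtw
      rw [hsub _ _ hx hx', hsub _ _ hx hy, if_pos (by omega), if_pos (by omega)]
      omega
    · unfold CcwBtw
      rw [hsub _ _ hy hy', hsub _ _ hy hx, if_pos (by omega), if_neg (by omega)]
      omega
  have h0m : (0, m) ∈ F := by
    rw [hF]
    refine ⟨by omega, hmn, by omega, ?_⟩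
    rw [hmdef, hback]
    simpa using hd
  have hinner : ∀ x y, (x, y) ∈ F → y ≤ m → x = 0 ∧ y = m := by
    intro x y h hym
    obtain ⟨hx, hy, hxy, he⟩ := (hF x y).1 h
    have := hcon _ _ he
    rw [hcast x hx, hcast y hy] at this
    have := this hxy hym
    omega
  have hm2 := (hFlen _ _ h0m).2.2
  have hn1 : (0, n - 1) ∉ F := fun h => (hFlen _ _ h).2.2 ⟨rfl, rfl⟩
  have h1m : (1, m) ∉ insert (0, n - 1) F := by
    intro h
    rcases Finset.mem_insert.1 h with h | h
    · simp at h
    · have := hinner _ _ h le_rfl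
      omega
  have hG : ∀ x y, (x, y) ∈ insert (1, m) (insert (0, n - 1) F) ↔
      (x = 1 ∧ y = m) ∨ (x = 0 ∧ y = n - 1) ∨ (x, y) ∈ F := by
    intro x y
    simp [Finset.mem_insert]
  have hbound := card_le_of_noncross (n - 1) (insert (1, m) (insert (0, n - 1) F)) ?_ ?_ ?_
  · rw [Finset.card_insert_of_notMem h1m, Finset.card_insert_of_notMem hn1] at hbound
    omega
  · rintro ⟨x, y⟩ h
    simp only
    rcases (hG x y).1 h with h | h | h
    · omega
    · omega
    · exact (hFlen _ _ h).1
  · rintro ⟨x, y⟩ h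
    simp only
    rcases (hG x y).1 h with h | h | h
    · omega
    · omega
    · exact (hFlen _ _ h).2.1
  · rintro ⟨x, y⟩ h ⟨x', y'⟩ h' ⟨c1, c2, c3⟩
    simp only at c1 c2 c3
    rcases (hG x y).1 h with g | g | g <;> rcases (hG x' y').1 h' with g' | g' | g'
    · omega
    · omega
    · exact hFnc _ _ _ _ h0m g' ⟨by omega, by omega, by omega⟩
    · omega
    · omega
    · have := hFlen _ _ g'
      omega
    · have := hinner _ _ g (by omega)
      omega
    · omega
    · exact hFnc _ _ _ _ g g' ⟨c1, c2, c3⟩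

/-- The angle in `[0, 2π)` swept counterclockwise from the vertex `i` to the vertex `j`. -/
noncomputable def arc {n : ℕ} (θ : ZMod n → ℝ) (i j : ZMod n) : ℝ :=
  if i.val ≤ j.val then θ j - θ i else θ j - θ i + 2 * Real.pi

lemma norm_pt_sub_sq (α β : ℝ) : ‖pt α - pt β‖ ^ 2 = 2 - 2 * Real.cos (β - α) := by
  rw [EuclideanSpace.norm_sq_eq, Fin.sum_univ_two, Real.cos_sub]
  simp only [pt, PiLp.sub_apply, WithLp.equiv_symm_apply, Matrix.cons_val_zero,
    Matrix.cons_val_one, Real.norm_eq_abs, sq_abs]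
  linarith [Real.sin_sq_add_cos_sq α, Real.sin_sq_add_cos_sq β]

lemma cos_arc_sub {n : ℕ} (θ : ZMod n → ℝ) (a i j : ZMod n) :
    Real.cos (arc θ a j - arc θ a i) = Real.cos (θ j - θ i) := by
  unfold arc
  split_ifs
  · congr 1; ring
  · rw [← Real.cos_sub_two_pi (θ j - θ i)]
    congr 1; ring
  · rw [← Real.cos_add_two_pi (θ j - θ i)]
    congr 1; ring
  · congr 1; ring

lemma arc_lt_arc {n : ℕ} [NeZero n] (θ : ZMod n → ℝ)
    (hmono : ∀ i j : ZMod n, i.val < j.val → θ i < θ j)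
    (hlb : ∀ i : ZMod n, 0 ≤ θ i) (hub : ∀ i : ZMod n, θ i < 2 * Real.pi)
    (a i j : ZMod n) (h : (i - a).val < (j - a).val) : arc θ a i < arc θ a j := by
  rw [val_sub_eq, val_sub_eq] at h
  have := ZMod.val_lt i
  have := ZMod.val_lt j
  have := ZMod.val_lt a
  unfold arc
  split_ifs at h ⊢
  · linarith [hmono i j (by omega)]
  · linarith [hub i, hlb j]
  · omega
  · linarith [hmono i j (by omega)]

/-- On an arc from `a` to `b` of angle at most `π`, every chord other than the whole of `{a, b}`
is shorter than `{a, b}`. -/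
lemma len_lt_of_arc_lt {n : ℕ} [NeZero n] (θ : ZMod n → ℝ)
    (hmono : ∀ i j : ZMod n, i.val < j.val → θ i < θ j)
    (hlb : ∀ i : ZMod n, 0 ≤ θ i) (hub : ∀ i : ZMod n, θ i < 2 * Real.pi)
    (p : ZMod n → EuclideanSpace ℝ (Fin 2)) (hp : ∀ i : ZMod n, p i = pt (θ i))
    (a b k l : ZMod n) (hab : arc θ a b ≤ Real.pi)
    (h1 : (k - a).val < (l - a).val) (h2 : (l - a).val ≤ (b - a).val)
    (h3 : 0 < (k - a).val ∨ (l - a).val < (b - a).val) :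
    len p s(k, l) < len p s(a, b) := by
  have haa : arc θ a a = 0 := by simp [arc]
  have hz : (a - a).val = 0 := by simp
  have hlt := arc_lt_arc θ hmono hlb hub a
  have hle : ∀ i j : ZMod n, (i - a).val ≤ (j - a).val → arc θ a i ≤ arc θ a j := by
    intro i j h
    rcases h.lt_or_eq with h | h
    · exact (hlt i j h).le
    · have : i = j := sub_left_injective (ZMod.val_injective n h)
      rw [this]
  have e1 := hlt k l h1
  have e2 := hle l b h2
  have e3 := hle a k (by omega)
  have e4 : arc θ a l - arc θ a k < arc θ a b - arc θ a a := by
    rcases h3 with h | h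
    · linarith [hlt a k (by omega)]
    · linarith [hlt l b h]
  have hcos := Real.cos_lt_cos_of_nonneg_of_le_pi (by linarith) (by linarith) e4
  rw [cos_arc_sub, cos_arc_sub] at hcos
  have s1 := norm_pt_sub_sq (θ k) (θ l)
  have s2 := norm_pt_sub_sq (θ a) (θ b)
  change ‖p k - p l‖ < ‖p a - p b‖
  rw [hp, hp, hp, hp]
  exact lt_of_pow_lt_pow_left₀ 2 (norm_nonneg _) (by linarith)

theorem stmt3 {n : ℕ} [NeZero n] (hn : 5 ≤ n)
    (θ : ZMod n → ℝ)
    (hmono : ∀ i j : ZMod n, i.val < j.val → θ i < θ j)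
    (hlb : ∀ i : ZMod n, 0 ≤ θ i) (hub : ∀ i : ZMod n, θ i < 2 * Real.pi)
    (p : ZMod n → EuclideanSpace ℝ (Fin 2)) (hp : ∀ i : ZMod n, p i = pt (θ i))
    (τ : Finset (Sym2 (ZMod n))) (hτ : IsTriangulation τ)
    (d : Sym2 (ZMod n)) (hd : d ∈ τ)
    (hmin : ∀ d' ∈ τ, len p d ≤ len p d') :
    ∃ i : ZMod n, d = ear i := by
  have key : ∀ a b : ZMod n, d = s(a, b) → arc θ a b ≤ Real.pi → ∃ i : ZMod n, d = ear i := by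
    rintro a b rfl hab
    obtain ⟨g1, g2, -⟩ := (hτ.2.1 _ hd).ne
    have hb : b = a + ((b - a).val : ZMod n) := by
      rw [ZMod.natCast_zmod_val]
      ring
    by_cases hm : 3 ≤ (b - a).val
    · obtain ⟨k, l, hkl, h1, h2, h3⟩ := exists_inner hn τ hτ a b hd hm
      exact absurd (hmin _ hkl)
        (not_le.2 (len_lt_of_arc_lt θ hmono hlb hub p hp a b k l hab h1 h2 h3))
    · have hm2 : (b - a).val = 2 := by
        have h0 : (b - a).val ≠ 0 := by
          intro h
          rw [h] at hb
          exact g1 (by simpa using hb.symm)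
        have h1 : (b - a).val ≠ 1 := by
          intro h
          rw [h] at hb
          exact g2 (by simpa using hb)
        omega
      refine ⟨a + 1, ?_⟩
      rw [hm2] at hb
      rw [hb, ear, add_sub_cancel_right, add_assoc, one_add_one_eq_two, Nat.cast_ofNat]
  induction d using Sym2.ind with
  | _ a b =>
    have hne := (hτ.2.1 _ hd).ne.1
    have hsum : arc θ a b + arc θ b a = 2 * Real.pi := by
      have : a.val ≠ b.val := fun h => hne (ZMod.val_injective n h)
      unfold arc
      split_ifs
      · omega
      · ring
      · ring
      · omega
    rcases le_total (arc θ a b) Real.pi with h | h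
    · exact key a b rfl h
    · exact key b a Sym2.eq_swap (by linarith)
end

section
/- Let n ≥ 5. For any two distinct non-crossing ears e_i and e_j of the convex n-gon, there exists a triangulation containing both e_i and e_j. -/
variable {n : ℕ} [NeZero n]

theorem val_cast_sub {n : ℕ} [NeZero n] {u w : ℕ} (hu : u < n) (hw : w < n) :
    ((w : ZMod n) - (u : ZMod n)).val = if u ≤ w then w - u else n + w - u := by
  split_ifs with h
  · rw [← Nat.cast_sub h, ZMod.val_cast_of_lt (by omega)]
  · have : (w : ZMod n) - (u : ZMod n) = ((n + w - u : ℕ) : ZMod n) := by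
      rw [Nat.cast_sub (by omega), Nat.cast_add, ZMod.natCast_self, zero_add]
    rw [this, ZMod.val_cast_of_lt (by omega)]

theorem add_cast_inj {n : ℕ} [NeZero n] {a : ZMod n} {u w : ℕ} (hu : u < n) (hw : w < n)
    (h : a + (u : ZMod n) = a + (w : ZMod n)) : u = w := by
  have := congrArg ZMod.val (add_left_cancel h)
  rwa [ZMod.val_cast_of_lt hu, ZMod.val_cast_of_lt hw] at this

theorem mk_add_inj {n : ℕ} [NeZero n] {a : ZMod n} {u v w x : ℕ} (huv : u < v) (hv : v < n)
    (hwx : w < x) (hx : x < n)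
    (h : s(a + (u : ZMod n), a + (v : ZMod n)) = s(a + (w : ZMod n), a + (x : ZMod n))) :
    u = w ∧ v = x := by
  rcases Sym2.eq_iff.1 h with ⟨h1, h2⟩ | ⟨h1, h2⟩
  · exact ⟨add_cast_inj (by omega) (by omega) h1, add_cast_inj (by omega) (by omega) h2⟩
  · have := add_cast_inj (by omega) (by omega) h1
    have := add_cast_inj (by omega) (by omega) h2
    omega

theorem ccwBtw_add_iff {n : ℕ} [NeZero n] {a : ZMod n} {u v w : ℕ} (hu : u < n) (hv : v < n)
    (hw : w < n) :
    CcwBtw (a + (u : ZMod n)) (a + (w : ZMod n)) (a + (v : ZMod n)) ↔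
      u < w ∧ w < v ∨ w < v ∧ v < u ∨ v < u ∧ u < w := by
  unfold CcwBtw
  rw [add_sub_add_left_eq_sub, add_sub_add_left_eq_sub, val_cast_sub hu hw, val_cast_sub hu hv]
  split_ifs <;> omega

/-- If two diagonals cross, their endpoints, read off from any base point, interleave. -/
theorem lt_of_crosses {n : ℕ} [NeZero n] {a : ZMod n} {u v w x : ℕ} (huv : u < v) (hv : v < n)
    (hwx : w < x) (hx : x < n)
    (h : Crosses s(a + (u : ZMod n), a + (v : ZMod n)) s(a + (w : ZMod n), a + (x : ZMod n))) :
    u < w ∧ w < v ∧ v < x ∨ w < u ∧ u < x ∧ x < v := by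
  obtain ⟨i, j, k, l, h1, h2, h3, h4⟩ := h
  rcases Sym2.eq_iff.1 h1 with ⟨rfl, rfl⟩ | ⟨rfl, rfl⟩ <;>
  rcases Sym2.eq_iff.1 h2 with ⟨rfl, rfl⟩ | ⟨rfl, rfl⟩ <;>
  rw [ccwBtw_add_iff (by omega) (by omega) (by omega)] at h3 h4 <;>
  omega

theorem isDiag_add {n : ℕ} [NeZero n] {a : ZMod n} {u v : ℕ} (huv : u + 2 ≤ v) (hv : v < n)
    (h : v - u ≠ n - 1) : IsDiag s(a + (u : ZMod n), a + (v : ZMod n)) := by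
  refine ⟨_, _, rfl, ?_, ?_, ?_⟩
  · intro e
    have e' : a + ((v + 1 : ℕ) : ZMod n) = a + (u : ZMod n) := by
      push_cast; rw [← add_assoc, e]; ring
    -- For `v = n - 1` the successor wraps around to the base point, which forces `u = 0`.
    rcases Nat.lt_or_ge (v + 1) n with h1 | h1
    · have := add_cast_inj h1 (by omega) e'
      omega
    · obtain rfl : n = v + 1 := by omega
      rw [ZMod.natCast_self] at e'
      have := add_cast_inj (a := a) (u := 0) (w := u) (by omega) (by omega) (by simpa using e')
      omega
  · intro e
    have := add_cast_inj hv (by omega) e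
    omega
  · intro e
    have := add_cast_inj (u := v) (w := u + 1) hv (by omega) (a := a)
      (by rw [e]; push_cast; ring)
    omega

theorem crosses_ear_succ {n : ℕ} [NeZero n] (hn : 5 ≤ n) (i : ZMod n) :
    Crosses (ear i) (ear (i + 1)) := by
  refine ⟨i - 1 + (0 : ℕ), i - 1 + (2 : ℕ), i - 1 + (1 : ℕ), i - 1 + (3 : ℕ), ?_, ?_, ?_, ?_⟩
  · unfold ear; refine Sym2.eq_iff.2 (Or.inl ⟨?_, ?_⟩) <;> push_cast <;> ring
  · unfold ear; refine Sym2.eq_iff.2 (Or.inl ⟨?_, ?_⟩) <;> push_cast <;> ring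
  all_goals
    rw [ccwBtw_add_iff (by omega) (by omega) (by omega)]
    omega

theorem crosses_ear_pred {n : ℕ} [NeZero n] (hn : 5 ≤ n) (i : ZMod n) :
    Crosses (ear i) (ear (i - 1)) := by
  refine ⟨i - 2 + (1 : ℕ), i - 2 + (3 : ℕ), i - 2 + (2 : ℕ), i - 2 + (0 : ℕ), ?_, ?_, ?_, ?_⟩
  · unfold ear; refine Sym2.eq_iff.2 (Or.inl ⟨?_, ?_⟩) <;> push_cast <;> ring
  · unfold ear
    rw [Sym2.eq_swap]
    refine Sym2.eq_iff.2 (Or.inl ⟨?_, ?_⟩) <;> push_cast <;> ring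
  all_goals
    rw [ccwBtw_add_iff (by omega) (by omega) (by omega)]
    omega

/-- The `k`-th diagonal of the fan at `a`, namely `{a, a + k}`, except that the one with `k = q`
is flipped to `{a + q - 1, a + q + 1}`.  Only indices `k ≥ 2` are used, so the natural-number
subtraction `k - 1` does not truncate. -/
def flipFan {n : ℕ} (a : ZMod n) (q k : ℕ) : Sym2 (ZMod n) :=
  s(a + ((if k = q then k - 1 else 0 : ℕ) : ZMod n),
    a + ((if k = q then k + 1 else k : ℕ) : ZMod n))

/-- The flipped fan is a triangulation.  For `q = 1` no index `k ≥ 2` is flipped, and this is the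
ordinary fan. -/
theorem isTriangulation_flipFan {n : ℕ} [NeZero n] (a : ZMod n) {q : ℕ}
    (hq : 1 ≤ q) (hqn : q + 3 ≤ n) :
    IsTriangulation ((Finset.Icc 2 (n - 2)).image (flipFan a q)) := by
  refine ⟨?_, ?_, ?_⟩
  · rw [Finset.card_image_of_injOn, Nat.card_Icc]
    · omega
    · intro k hk l hl h
      simp only [Finset.coe_Icc, Set.mem_Icc] at hk hl
      have := mk_add_inj (by split_ifs <;> omega) (by split_ifs <;> omega)
        (by split_ifs <;> omega) (by split_ifs <;> omega) h
      split_ifs at this <;> omega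
  · intro d hd
    obtain ⟨k, hk, rfl⟩ := Finset.mem_image.1 hd
    rw [Finset.mem_Icc] at hk
    exact isDiag_add (by split_ifs <;> omega) (by split_ifs <;> omega) (by split_ifs <;> omega)
  · intro d hd e he h
    obtain ⟨k, hk, rfl⟩ := Finset.mem_image.1 hd
    obtain ⟨l, hl, rfl⟩ := Finset.mem_image.1 he
    rw [Finset.mem_Icc] at hk hl
    have := lt_of_crosses (by split_ifs <;> omega) (by split_ifs <;> omega)
        (by split_ifs <;> omega) (by split_ifs <;> omega) h
    split_ifs at this <;> omega

theorem stmt4 {n : ℕ} [NeZero n] (hn : 5 ≤ n) (i j : ZMod n)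
    (hne : ear i ≠ ear j) (hnc : ¬ Crosses (ear i) (ear j)) :
    ∃ τ : Finset (Sym2 (ZMod n)), IsTriangulation τ ∧ ear i ∈ τ ∧ ear j ∈ τ := by
  obtain ⟨q, hqn, rfl⟩ : ∃ q : ℕ, q < n ∧ j = i + 1 + (q : ZMod n) :=
    ⟨(j - (i + 1)).val, ZMod.val_lt _, by rw [ZMod.natCast_zmod_val]; ring⟩
  have h0 : q ≠ 0 := by
    rintro rfl
    apply hnc
    simpa using crosses_ear_succ hn i
  have h1 : q ≠ n - 1 := by
    rintro rfl
    apply hne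
    congr 1
    rw [Nat.cast_sub (by omega), ZMod.natCast_self]
    push_cast; ring
  have h2 : q ≠ n - 2 := by
    rintro rfl
    apply hnc
    convert crosses_ear_pred hn i using 2
    rw [Nat.cast_sub (by omega), ZMod.natCast_self]
    push_cast; ring
  refine ⟨_, isTriangulation_flipFan (i + 1) (q := q) (by omega) (by omega), ?_, ?_⟩
  · refine Finset.mem_image.2 ⟨n - 2, Finset.mem_Icc.2 ⟨by omega, le_rfl⟩, ?_⟩
    unfold flipFan ear
    rw [if_neg (by omega), if_neg (by omega), Nat.cast_sub (by omega), ZMod.natCast_self,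
      Sym2.eq_swap]
    refine Sym2.eq_iff.2 (Or.inl ⟨?_, ?_⟩) <;> push_cast <;> ring
  · rcases eq_or_ne q 1 with rfl | hq
    · refine Finset.mem_image.2 ⟨2, Finset.mem_Icc.2 ⟨by omega, by omega⟩, ?_⟩
      unfold flipFan ear
      rw [if_neg (by omega), if_neg (by omega)]
      refine Sym2.eq_iff.2 (Or.inl ⟨?_, ?_⟩) <;> push_cast <;> ring
    · refine Finset.mem_image.2 ⟨q, Finset.mem_Icc.2 ⟨by omega, by omega⟩, ?_⟩
      unfold flipFan ear
      rw [if_pos rfl, if_pos rfl, Nat.cast_sub (by omega)]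
      refine Sym2.eq_iff.2 (Or.inl ⟨?_, ?_⟩) <;> push_cast <;> ring
end

section
/- Let n ≥ 5 and let P = {p_0, …, p_{n−1}} be n distinct points on the unit circle listed in counterclockwise cyclic order. Every length maximal triangulation τ of P has exactly two ears, i.e. the set of indices i with e_i ∈ τ has exactly two elements. (Equivalently, the dual tree of τ is a path.) -/
variable {n : ℕ} [NeZero n]

/-! ### Integer lifts of indices -/

lemma val_sub_cast {i j : ℤ} (h1 : i ≤ j) (h2 : j < i + n) :
    ((((j : ZMod n) - (i : ZMod n)).val : ℕ) : ℤ) = j - i := by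
  rw [← Int.cast_sub, ZMod.val_intCast, Int.emod_eq_of_lt] <;> omega

lemma cast_add_n (i : ℤ) : ((i + n : ℤ) : ZMod n) = (i : ZMod n) := by simp

lemma exists_lift (c : ℤ) (x : ZMod n) : ∃ m : ℤ, c ≤ m ∧ m < c + n ∧ (m : ZMod n) = x := by
  have := ZMod.val_lt (x - (c : ZMod n))
  refine ⟨c + (x - (c : ZMod n)).val, by omega, by omega, ?_⟩
  push_cast
  rw [ZMod.natCast_zmod_val]
  ring

lemma lift_unique {c i j : ℤ} (hi : c ≤ i) (hi' : i < c + n) (hj : c ≤ j) (hj' : j < c + n)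
    (h : (i : ZMod n) = j) : i = j := by
  have h1 := val_sub_cast (n := n) hi hi'
  have h2 := val_sub_cast (n := n) hj hj'
  rw [h] at h1
  omega

lemma exists_lift_sym2 (e : Sym2 (ZMod n)) :
    ∃ i j : ℤ, 0 ≤ i ∧ i ≤ j ∧ j < n ∧ e = s((i : ZMod n), (j : ZMod n)) := by
  induction e using Sym2.ind with
  | _ x y =>
    obtain ⟨i, hi, hi', rfl⟩ := exists_lift 0 x
    obtain ⟨j, hj, hj', rfl⟩ := exists_lift 0 y
    rcases le_total i j with h | h
    · exact ⟨i, j, hi, h, by omega, rfl⟩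
    · exact ⟨j, i, hj, h, by omega, Sym2.eq_swap⟩

lemma btw_cast {i j : ℤ} (h1 : i < j) (h2 : j < i + n) {x : ZMod n}
    (h : CcwBtw (i : ZMod n) x j) : ∃ k : ℤ, i < k ∧ k < j ∧ (k : ZMod n) = x := by
  obtain ⟨k, hk, hk', rfl⟩ := exists_lift i x
  have a := val_sub_cast (n := n) hk hk'
  have b := val_sub_cast (n := n) h1.le h2
  obtain ⟨h3, h4⟩ := h
  exact ⟨k, by omega, by omega, rfl⟩

lemma cast_btw {i k j : ℤ} (h1 : i < k) (h2 : k < j) (h3 : j < i + n) :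
    CcwBtw (i : ZMod n) (k : ZMod n) j := by
  have a := val_sub_cast (n := n) (i := i) (j := k) (by omega) (by omega)
  have b := val_sub_cast (n := n) (i := i) (j := j) (by omega) (by omega)
  constructor <;> omega

/-- The crossing relation in terms of lifts, for a fixed lift of the first diagonal. -/
lemma crosses_iff {i j : ℤ} (h1 : i < j) (h2 : j < i + n) (e : Sym2 (ZMod n)) :
    Crosses s((i : ZMod n), (j : ZMod n)) e ↔
      ∃ k l : ℤ, i < k ∧ k < j ∧ j < l ∧ l < i + n ∧ e = s((k : ZMod n), (l : ZMod n)) := by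
  constructor
  · rintro ⟨i', j', k', l', h, rfl, h3, h4⟩
    rw [Sym2.eq_iff] at h
    rcases h with ⟨rfl, rfl⟩ | ⟨rfl, rfl⟩
    · obtain ⟨k, hk, hk', rfl⟩ := btw_cast h1 h2 h3
      rw [← cast_add_n i] at h4
      obtain ⟨l, hl, hl', rfl⟩ := btw_cast (by omega) (by omega) h4
      exact ⟨k, l, hk, hk', hl, hl', rfl⟩
    · obtain ⟨k, hk, hk', rfl⟩ := btw_cast h1 h2 h4
      rw [← cast_add_n i] at h3
      obtain ⟨l, hl, hl', rfl⟩ := btw_cast (by omega) (by omega) h3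
      exact ⟨k, l, hk, hk', hl, hl', Sym2.eq_swap⟩
  · rintro ⟨k, l, hk, hk', hl, hl', rfl⟩
    refine ⟨i, j, k, l, rfl, rfl, cast_btw hk hk' h2, ?_⟩
    rw [← cast_add_n i]
    exact cast_btw hl hl' (by omega)

lemma crosses_symm {d e : Sym2 (ZMod n)} (h : Crosses d e) : Crosses e d := by
  obtain ⟨i', j', k', l', rfl, rfl, h3, h4⟩ := h
  obtain ⟨i, -, -, rfl⟩ := exists_lift 0 i'
  obtain ⟨j, hj, hj', rfl⟩ := exists_lift i j'
  have h5 := val_sub_cast (n := n) hj hj'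
  have h6 : i < j := by have := h3.1; have := h3.2; omega
  obtain ⟨k, hk, hk', rfl⟩ := btw_cast h6 hj' h3
  rw [← cast_add_n i] at h4
  obtain ⟨l, hl, hl', rfl⟩ := btw_cast (by omega) (by omega) h4
  rw [crosses_iff (by omega) (by omega)]
  refine ⟨j, i + n, hk', hl, hl', by omega, ?_⟩
  rw [cast_add_n]
  exact Sym2.eq_swap

lemma isDiag_iff {i j : ℤ} (h1 : i ≤ j) (h2 : j < i + n) :
    IsDiag s((i : ZMod n), (j : ZMod n)) ↔ i + 2 ≤ j ∧ j + 2 ≤ i + n := by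
  have key : IsDiag s((i : ZMod n), (j : ZMod n)) ↔
      (j : ZMod n) ≠ i - 1 ∧ (j : ZMod n) ≠ i ∧ (j : ZMod n) ≠ i + 1 := by
    constructor
    · rintro ⟨x, y, h, h3, h4, h5⟩
      rw [Sym2.eq_iff] at h
      rcases h with ⟨rfl, rfl⟩ | ⟨rfl, rfl⟩
      · exact ⟨h3, h4, h5⟩
      · refine ⟨fun h => h5 ?_, fun h => h4 h.symm, fun h => h3 ?_⟩
        · rw [h]; ring
        · rw [h]; ring
    · rintro ⟨h3, h4, h5⟩
      exact ⟨_, _, rfl, h3, h4, h5⟩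
  rw [key]
  constructor
  · rintro ⟨h3, h4, h5⟩
    have a : j ≠ i := fun h => h4 (by rw [h])
    have b : j ≠ i + 1 := fun h => h5 (by rw [h]; push_cast; rfl)
    have c : j ≠ i + n - 1 := fun h => h3 (by rw [h]; push_cast; simp)
    omega
  · rintro ⟨h3, h4⟩
    refine ⟨fun h => ?_, fun h => ?_, fun h => ?_⟩
    · have : ((j : ℤ) : ZMod n) = ((i + n - 1 : ℤ) : ZMod n) := by rw [h]; push_cast; simp
      have := lift_unique (c := i) (by omega) (by omega) (by omega) (by omega) this
      omega
    · have := lift_unique (c := i) (by omega) (by omega) (by omega) (by omega) h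
      omega
    · have : ((j : ℤ) : ZMod n) = ((i + 1 : ℤ) : ZMod n) := by rw [h]; push_cast; rfl
      have := lift_unique (c := i) (by omega) (by omega) (by omega) (by omega) this
      omega

/-! ### Non-crossing families -/

/-- A family of pairwise non-crossing diagonals, of any cardinality. -/
def NonCrossing (σ : Finset (Sym2 (ZMod n))) : Prop :=
  (∀ d ∈ σ, IsDiag d) ∧ ∀ d ∈ σ, ∀ e ∈ σ, ¬ Crosses d e

/-- The integers `i`, `j` are lifts of the endpoints of a diagonal in `σ`. -/
def S (σ : Finset (Sym2 (ZMod n))) (i j : ℤ) : Prop := s((i : ZMod n), (j : ZMod n)) ∈ σ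

lemma S.shift {σ : Finset (Sym2 (ZMod n))} {i j : ℤ} (h : S σ i j) : S σ j (i + n) := by
  unfold S at *
  rwa [cast_add_n, Sym2.eq_swap]

lemma NonCrossing.nc {σ : Finset (Sym2 (ZMod n))} (hσ : NonCrossing σ) {i j k l : ℤ}
    (h1 : S σ i j) (h2 : S σ k l) (h3 : i < k) (h4 : k < j) (h5 : j < l) (h6 : l < i + n) :
    False :=
  hσ.2 _ h1 _ h2 ((crosses_iff (by omega) (by omega) _).2 ⟨k, l, h3, h4, h5, h6, rfl⟩)

lemma NonCrossing.diag {σ : Finset (Sym2 (ZMod n))} (hσ : NonCrossing σ) {i j : ℤ}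
    (h1 : S σ i j) (h2 : i ≤ j) (h3 : j < i + n) : i + 2 ≤ j ∧ j + 2 ≤ i + n :=
  (isDiag_iff h2 h3).1 (hσ.1 _ h1)

lemma exists_last (P : ℤ → Prop) {i j : ℤ} (h : i + 1 < j) (hP : P (i + 1)) :
    ∃ k, i < k ∧ k < j ∧ P k ∧ ∀ l, k < l → l < j → ¬ P l := by
  obtain ⟨k, ⟨h1, h2, h3⟩, h4⟩ := Int.exists_greatest_of_bdd
    (P := fun k => i < k ∧ k < j ∧ P k) ⟨j, fun z hz => hz.2.1.le⟩ ⟨i + 1, by omega, h, hP⟩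
  refine ⟨k, h1, h2, h3, fun l hl hl' hPl => ?_⟩
  have := h4 l ⟨by omega, hl', hPl⟩
  omega

/-- A non-crossing family of intervals of length at least `2` in `[0, m]` has at most `m - 1`
members: send `(i, j)` to the largest `k < j` such that `(i, k)` is in the family or has
length `1`. This map is injective. -/
lemma interval_bound (F : Finset (ℤ × ℤ)) (m : ℤ)
    (hF : ∀ x ∈ F, 0 ≤ x.1 ∧ x.1 + 2 ≤ x.2 ∧ x.2 ≤ m)
    (hnc : ∀ x ∈ F, ∀ y ∈ F, x.1 < y.1 → y.1 < x.2 → x.2 < y.2 → False) :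
    F.card ≤ (m - 1).toNat := by
  have ex : ∀ x : ℤ × ℤ, ∃ k, x ∈ F → x.1 < k ∧ k < x.2 ∧ (k = x.1 + 1 ∨ (x.1, k) ∈ F) ∧
      ∀ l, k < l → l < x.2 → ¬ (l = x.1 + 1 ∨ (x.1, l) ∈ F) := by
    intro x
    by_cases hx : x ∈ F
    · obtain ⟨k, hk⟩ := exists_last (fun k => k = x.1 + 1 ∨ (x.1, k) ∈ F) (i := x.1) (j := x.2)
        (by have := hF x hx; omega) (Or.inl rfl)
      exact ⟨k, fun _ => hk⟩
    · exact ⟨0, fun h => absurd h hx⟩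
  choose f hf using ex
  have key : ∀ x ∈ F, ∀ y ∈ F, f x = f y → y.1 ≤ x.1 → x = y := by
    rintro ⟨i, j⟩ hx ⟨i', j'⟩ hy hxy hle
    obtain ⟨a1, a2, a3, a4⟩ := hf _ hx
    obtain ⟨b1, b2, b3, b4⟩ := hf _ hy
    dsimp only at *
    rw [hxy] at a1 a2 a3 a4
    rcases hle.lt_or_eq with h | rfl
    · rcases b3 with b3 | b3
      · omega
      · exact (hnc _ b3 _ hx h a1 a2).elim
    · rcases lt_trichotomy j j' with h | rfl | h
      · exact (b4 j a2 h (Or.inr hx)).elim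
      · rfl
      · exact (a4 j' b2 h (Or.inr hy)).elim
  have : F.card ≤ (Finset.Ioo 0 m).card := by
    refine Finset.card_le_card_of_injOn f ?_ ?_
    · intro x hx
      have := hf x hx
      have := hF x hx
      simp only [Finset.coe_Ioo, Set.mem_Ioo]
      omega
    · intro x hx y hy hxy
      rcases le_total y.1 x.1 with h | h
      · exact key x hx y hy hxy h
      · exact (key y hy x hx hxy.symm h).symm
  simpa using this

open scoped Classical in
/-- The intervals of `interval_bound` are the diagonals, written with endpoints in `[0, n - 1]`. -/
lemma card_bound (hn : 5 ≤ n) {σ : Finset (Sym2 (ZMod n))} (hσ : NonCrossing σ) :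
    σ.card + 3 ≤ n := by
  set F : Finset (ℤ × ℤ) := (Finset.Ico (0 : ℤ) n ×ˢ Finset.Ico (0 : ℤ) n).filter
    fun x => x.1 ≤ x.2 ∧ S σ x.1 x.2 with hFdef
  have hF : ∀ x ∈ F, 0 ≤ x.1 ∧ x.1 + 2 ≤ x.2 ∧ x.2 < n ∧ x.2 + 2 ≤ x.1 + n ∧ S σ x.1 x.2 := by
    intro x hx
    simp only [hFdef, Finset.mem_filter, Finset.mem_product, Finset.mem_Ico] at hx
    have := hσ.diag hx.2.2 hx.2.1 (by omega)
    exact ⟨by omega, by omega, by omega, by omega, hx.2.2⟩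
  have h1 : σ.card ≤ F.card := by
    refine (Finset.card_le_card ?_).trans
      (Finset.card_image_le (f := fun x : ℤ × ℤ => s((x.1 : ZMod n), (x.2 : ZMod n))))
    intro e he
    obtain ⟨i, j, hi, hij, hj, rfl⟩ := exists_lift_sym2 e
    refine Finset.mem_image.2 ⟨(i, j), ?_, rfl⟩
    simp only [hFdef, Finset.mem_filter, Finset.mem_product, Finset.mem_Ico]
    exact ⟨⟨⟨hi, by omega⟩, by omega, hj⟩, hij, he⟩
  -- The chord `(0, n - 1)` crosses nothing; adding it accounts for one more interval.
  have h2 : ((0 : ℤ), (n : ℤ) - 1) ∉ F := fun h => by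
    have := hF _ h
    dsimp only at this
    omega
  have h3 := interval_bound (insert ((0 : ℤ), (n : ℤ) - 1) F) (n - 1) ?_ ?_
  · rw [Finset.card_insert_of_notMem h2] at h3
    omega
  · intro x hx
    rcases Finset.mem_insert.1 hx with rfl | hx
    · dsimp only
      omega
    · have := hF x hx
      omega
  · intro x hx y hy a b c
    rcases Finset.mem_insert.1 hx with rfl | hx <;> rcases Finset.mem_insert.1 hy with rfl | hy
    · omega
    · have := hF y hy
      dsimp only at *
      omega
    · have := hF x hx
      dsimp only at *
      omega
    · have hx := hF x hx
      have hy := hF y hy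
      exact hσ.nc hx.2.2.2.2 hy.2.2.2.2 a b c (by omega)

lemma NonCrossing.insert {σ : Finset (Sym2 (ZMod n))} (hσ : NonCrossing σ) {i j : ℤ}
    (h1 : i + 2 ≤ j) (h2 : j + 2 ≤ i + n)
    (h : ∀ k l, i < k → k < j → j < l → l < i + n → ¬ S σ k l) [DecidableEq (Sym2 (ZMod n))] :
    NonCrossing (insert s((i : ZMod n), (j : ZMod n)) σ) := by
  have h3 : ∀ e ∈ σ, ¬ Crosses s((i : ZMod n), (j : ZMod n)) e := by
    intro e he hc
    obtain ⟨k, l, a, b, c, d, rfl⟩ := (crosses_iff (by omega) (by omega) _).1 hc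
    exact h k l a b c d he
  refine ⟨fun d hd => ?_, fun d hd e he => ?_⟩
  · rcases Finset.mem_insert.1 hd with rfl | hd
    · exact (isDiag_iff (by omega) (by omega)).2 ⟨h1, h2⟩
    · exact hσ.1 d hd
  · rcases Finset.mem_insert.1 hd with rfl | hd <;> rcases Finset.mem_insert.1 he with rfl | he
    · rw [crosses_iff (by omega) (by omega)]
      rintro ⟨k, l, a, b, c, d, e⟩
      rw [Sym2.eq_iff] at e
      rcases e with ⟨e, -⟩ | ⟨-, e⟩
      · have := lift_unique (c := i) (by omega) (by omega) (by omega) (by omega) e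
        omega
      · have := lift_unique (c := i) (by omega) (by omega) (by omega) (by omega) e
        omega
    · exact h3 e he
    · exact fun hc => h3 d hd (crosses_symm hc)
    · exact hσ.2 d hd e he

/-- A diagonal crossing no diagonal of a triangulation belongs to it. -/
lemma IsTriangulation.maximal (hn : 5 ≤ n) {τ : Finset (Sym2 (ZMod n))} (hτ : IsTriangulation τ)
    {i j : ℤ} (h1 : i + 2 ≤ j) (h2 : j + 2 ≤ i + n)
    (h : ∀ k l, i < k → k < j → j < l → l < i + n → ¬ S τ k l) : S τ i j := by
  classical
  by_contra hS
  have hτ' : NonCrossing τ := hτ.2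
  have := card_bound hn (hτ'.insert h1 h2 h)
  rw [Finset.card_insert_of_notMem hS, hτ.1] at this
  omega

/-- Each side of a diagonal of a triangulation carries a triangle; `k` is its apex. -/
lemma IsTriangulation.apex (hn : 5 ≤ n) {τ : Finset (Sym2 (ZMod n))} (hτ : IsTriangulation τ)
    {i j : ℤ} (h1 : i < j) (h2 : j < i + n) (hS : S τ i j) :
    ∃ k, i < k ∧ k < j ∧ (k = i + 1 ∨ S τ i k) ∧ (j = k + 1 ∨ S τ k j) := by
  have hτ' : NonCrossing τ := hτ.2
  have hd := hτ'.diag hS h1.le h2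
  obtain ⟨k, a, b, c, d⟩ := exists_last (fun k => k = i + 1 ∨ S τ i k) (i := i) (j := j)
    (by omega) (Or.inl rfl)
  refine ⟨k, a, b, c, ?_⟩
  by_cases hj : j = k + 1
  · exact Or.inl hj
  refine Or.inr (hτ.maximal hn (by omega) (by omega) fun x y hx hx' hy hy' hxy => ?_)
  have hle : i + n ≤ y := by
    by_contra hlt
    exact hτ'.nc hS hxy (by omega) (by omega) hy (by omega)
  rcases hle.lt_or_eq with hlt | rfl
  · rcases c with c | c
    · omega
    · exact hτ'.nc hxy c.shift.shift (by omega) (by omega) (by omega) (by omega)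
  · have : S τ i x := by
      unfold S at *
      rwa [cast_add_n, Sym2.eq_swap] at hxy
    exact d x hx hx' (Or.inr this)

/-- Without inner triangles, there is exactly one ear on each side of a diagonal. -/
lemma exists_unique_ear (hn : 5 ≤ n) {τ : Finset (Sym2 (ZMod n))} (hτ : IsTriangulation τ)
    (hin : ∀ i j k : ℤ, i < j → j < k → k < i + n → S τ i j → S τ j k → S τ k (i + n) → False)
    (N : ℕ) : ∀ i j : ℤ, i < j → j < i + n → j - i = N → S τ i j →
      ∃ m, (i < m ∧ m < j ∧ S τ (m - 1) (m + 1)) ∧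
        ∀ m', i < m' → m' < j → S τ (m' - 1) (m' + 1) → m' = m := by
  have hτ' : NonCrossing τ := hτ.2
  induction N using Nat.strong_induction_on with
  | _ N ih =>
  intro i j h1 h2 hN hS
  have hd := hτ'.diag hS h1.le h2
  obtain ⟨k, a, b, c, d⟩ := hτ.apex hn h1 h2 hS
  by_cases hk : k = i + 1
  · by_cases hk' : j = k + 1
    · refine ⟨k, ⟨a, b, ?_⟩, fun m' _ _ _ => by omega⟩
      rw [← hk', show k - 1 = i by omega]
      exact hS
    · replace d := d.resolve_left hk'
      obtain ⟨m, ⟨e1, e2, e3⟩, e4⟩ := ih (j - k).toNat (by omega) k j b (by omega) (by omega) d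
      refine ⟨m, ⟨by omega, e2, e3⟩, fun m' f1 f2 f3 => ?_⟩
      by_cases hm : k < m'
      · exact e4 m' hm f2 f3
      · exact (hτ'.nc f3 d (by omega) (by omega) (by omega) (by omega)).elim
  · replace c := c.resolve_left hk
    by_cases hk' : j = k + 1
    · obtain ⟨m, ⟨e1, e2, e3⟩, e4⟩ := ih (k - i).toNat (by omega) i k a (by omega) (by omega) c
      refine ⟨m, ⟨e1, by omega, e3⟩, fun m' f1 f2 f3 => ?_⟩
      by_cases hm : m' < k
      · exact e4 m' f1 hm f3
      · exact (hτ'.nc c f3 (by omega) (by omega) (by omega) (by omega)).elim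
    · exact (hin i k j a b h2 c (d.resolve_left hk') hS.shift).elim

lemma card_ears (hn : 5 ≤ n) {τ : Finset (Sym2 (ZMod n))} (hτ : IsTriangulation τ)
    (hin : ∀ i j k : ℤ, i < j → j < k → k < i + n → S τ i j → S τ j k → S τ k (i + n) → False)
    [DecidablePred fun i : ZMod n => ear i ∈ τ] :
    (Finset.univ.filter fun i : ZMod n => ear i ∈ τ).card = 2 := by
  have hτ' : NonCrossing τ := hτ.2
  have hear : ∀ m : ℤ, ear (m : ZMod n) ∈ τ ↔ S τ (m - 1) (m + 1) := by
    intro m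
    simp [ear, S]
  obtain ⟨e, he⟩ : τ.Nonempty := by
    rw [← Finset.card_pos, hτ.1]
    omega
  obtain ⟨i, j, h1, h2, h3, rfl⟩ := exists_lift_sym2 e
  have hd := hτ'.diag (i := i) (j := j) he h2 (by omega)
  have hS : S τ i j := he
  obtain ⟨m, ⟨a1, a2, a3⟩, a4⟩ := exists_unique_ear hn hτ hin (j - i).toNat i j (by omega) (by omega)
    (by omega) hS
  obtain ⟨m', ⟨b1, b2, b3⟩, b4⟩ := exists_unique_ear hn hτ hin (i + n - j).toNat j (i + n)
    (by omega) (by omega) (by omega) hS.shift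
  rw [Finset.card_eq_two]
  refine ⟨m, m', fun h => ?_, ?_⟩
  · have := lift_unique (c := i) (by omega) (by omega) (by omega) (by omega) h
    omega
  · ext x
    simp only [Finset.mem_filter, Finset.mem_univ, true_and, Finset.mem_insert,
      Finset.mem_singleton]
    constructor
    · intro hx
      obtain ⟨y, hy, hy', rfl⟩ := exists_lift i x
      rw [hear] at hx
      rcases hy.lt_or_eq with hy | rfl
      · rcases lt_trichotomy y j with hlt | rfl | hlt
        · left
          rw [a4 y hy hlt hx]
        · exact (hτ'.nc hS hx (by omega) (by omega) (by omega) (by omega)).elim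
        · right
          rw [b4 y hlt hy' hx]
      · exact (hτ'.nc hx hS (by omega) (by omega) (by omega) (by omega)).elim
    · rintro (rfl | rfl)
      · exact (hear m).2 a3
      · exact (hear m').2 b3

/-! ### Lexicographic comparison of sorted lists -/

lemma orderedInsert_lex {a b : ℝ} (hab : a < b) (l : List ℝ) (hl : l.Pairwise (· ≤ ·)) :
    List.Lex (· < ·) (l.orderedInsert (· ≤ ·) a) (l.orderedInsert (· ≤ ·) b) := by
  induction l generalizing a with
  | nil => exact List.Lex.rel hab
  | cons x l ih =>
    obtain ⟨hx, hl'⟩ := List.pairwise_cons.1 hl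
    simp only [List.orderedInsert]
    split_ifs with h1 h2 h2
    · exact List.Lex.rel hab
    · rcases h1.lt_or_eq with h1 | rfl
      · exact List.Lex.rel h1
      · refine List.Lex.cons ?_
        have := ih hab hl'
        rwa [show l.orderedInsert (· ≤ ·) a = a :: l from ?_] at this
        cases l with
        | nil => rfl
        | cons y l => simp [List.orderedInsert, hx y (by simp)]
    · linarith
    · exact List.Lex.cons (ih hab hl')

lemma sort_cons_eq (a : ℝ) (s : Multiset ℝ) :
    (a ::ₘ s).sort (· ≤ ·) = (s.sort (· ≤ ·)).orderedInsert (· ≤ ·) a := by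
  refine List.Perm.eq_of_pairwise' (Multiset.pairwise_sort _ _)
    ((Multiset.pairwise_sort s _).orderedInsert a _) ?_
  rw [← Multiset.coe_eq_coe, Multiset.sort_eq,
    Multiset.coe_eq_coe.2 (List.perm_orderedInsert (· ≤ ·) a _), ← Multiset.cons_coe,
    Multiset.sort_eq]

lemma not_lexLE_of_lt {a b : ℝ} (hab : a < b) (s : Multiset ℝ) :
    ¬ lexLE ((b ::ₘ s).sort (· ≤ ·)) ((a ::ₘ s).sort (· ≤ ·)) := by
  rw [sort_cons_eq, sort_cons_eq]
  have h : (s.sort (· ≤ ·)).orderedInsert (· ≤ ·) a < (s.sort (· ≤ ·)).orderedInsert (· ≤ ·) b :=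
    orderedInsert_lex hab _ (Multiset.pairwise_sort _ _)
  rintro (h' | h')
  · rw [h'] at h
    exact lt_irrefl _ h
  · exact lt_asymm h h'

/-! ### Lengths and flips -/

/-- The lift of the angles to `ℤ`, increasing by `2π` over each period `n`. -/
noncomputable def lift (θ : ZMod n → ℝ) (k : ℤ) : ℝ := θ k + 2 * Real.pi * ((k / n : ℤ) : ℝ)

lemma lift_add_n (θ : ZMod n → ℝ) (k : ℤ) : lift θ (k + n) = lift θ k + 2 * Real.pi := by
  have hn : (n : ℤ) ≠ 0 := by exact_mod_cast NeZero.ne n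
  unfold lift
  rw [cast_add_n, Int.add_ediv_of_dvd_right (dvd_refl _), Int.ediv_self hn]
  push_cast
  ring

lemma lift_strictMono {θ : ZMod n → ℝ}
    (hmono : ∀ i j : ZMod n, i.val < j.val → θ i < θ j)
    (hlb : ∀ i : ZMod n, 0 ≤ θ i) (hub : ∀ i : ZMod n, θ i < 2 * Real.pi) :
    StrictMono (lift θ) := by
  intro k l hkl
  have hn : 0 < (n : ℤ) := by exact_mod_cast NeZero.pos n
  unfold lift
  rcases (Int.ediv_le_ediv hn hkl.le).lt_or_eq with h | h
  · have h' : ((k / n : ℤ) : ℝ) + 1 ≤ ((l / n : ℤ) : ℝ) := by exact_mod_cast h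
    have := hub k
    have := hlb l
    nlinarith [Real.pi_pos]
  · rw [h]
    have : (k : ZMod n).val < (l : ZMod n).val := by
      zify
      rw [ZMod.val_intCast, ZMod.val_intCast]
      have := Int.mul_ediv_add_emod k n
      have := Int.mul_ediv_add_emod l n
      rw [h] at *
      omega
    linarith [hmono _ _ this]

lemma norm_pt_sub (a b : ℝ) : ‖pt a - pt b‖ = 2 * |Real.sin ((b - a) / 2)| := by
  rw [EuclideanSpace.norm_eq, Real.sqrt_eq_iff_mul_self_eq (by positivity) (by positivity)]
  have h1 := Real.cos_sub b a
  have h2 := Real.cos_two_mul ((b - a) / 2)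
  have h3 := Real.sin_sq_add_cos_sq ((b - a) / 2)
  rw [show 2 * ((b - a) / 2) = b - a by ring] at h2
  have h4 := Real.sin_sq_add_cos_sq a
  have h5 := Real.sin_sq_add_cos_sq b
  have h6 := sq_abs (Real.sin ((b - a) / 2))
  simp only [pt, Fin.sum_univ_two, Real.norm_eq_abs, sq_abs, PiLp.sub_apply,
    WithLp.equiv_symm_apply, Matrix.cons_val_zero, Matrix.cons_val_one]
  nlinarith

lemma len_eq {θ : ZMod n → ℝ} {p : ZMod n → EuclideanSpace ℝ (Fin 2)}
    (hp : ∀ i : ZMod n, p i = pt (θ i)) (hm : StrictMono (lift θ)) {i j : ℤ} (h1 : i < j)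
    (h2 : j < i + n) :
    len p s((i : ZMod n), (j : ZMod n)) = 2 * Real.sin ((lift θ j - lift θ i) / 2) := by
  have a := hm h1
  have b := hm h2
  rw [lift_add_n] at b
  have h0 : ∀ k : ℤ, pt (θ k) = pt (lift θ k) := by
    intro k
    have hc := Real.cos_add_int_mul_two_pi (θ k) (k / n)
    have hs := Real.sin_add_int_mul_two_pi (θ k) (k / n)
    rw [mul_comm] at hc hs
    simp only [pt, lift, hc, hs]
  change ‖p i - p j‖ = _
  rw [hp, hp, h0, h0, norm_pt_sub,
    abs_of_pos (Real.sin_pos_of_pos_of_lt_pi (by linarith) (by linarith))]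

lemma sin_half_lt {α t : ℝ} (h0 : 0 < α) (h1 : α < t) (h2 : α < 2 * Real.pi - t) :
    Real.sin (α / 2) < Real.sin (t / 2) := by
  rcases le_total t Real.pi with h | h
  · exact Real.sin_lt_sin_of_lt_of_le_pi_div_two (by linarith) (by linarith) (by linarith)
  · rw [← Real.sin_pi_sub (t / 2)]
    exact Real.sin_lt_sin_of_lt_of_le_pi_div_two (by linarith) (by linarith) (by linarith)

/-- An inner triangle whose side `{i, j}` cuts off the smallest arc allows an improving flip of
that side. -/
lemma no_inner_triangle_aux (hn : 5 ≤ n) {θ : ZMod n → ℝ} {p : ZMod n → EuclideanSpace ℝ (Fin 2)}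
    (hp : ∀ i : ZMod n, p i = pt (θ i)) (hm : StrictMono (lift θ))
    {τ : Finset (Sym2 (ZMod n))} (hτ : LengthMaximal p τ) {i j k : ℤ} (hij : i < j) (hjk : j < k)
    (hki : k < i + n) (h1 : S τ i j) (h2 : S τ j k) (h3 : S τ k (i + n))
    (hs1 : lift θ j - lift θ i ≤ lift θ k - lift θ j)
    (hs2 : lift θ j - lift θ i ≤ lift θ (i + n) - lift θ k) : False := by
  classical
  obtain ⟨hτ, hmax⟩ := hτ
  have hτ' : NonCrossing τ := hτ.2
  obtain ⟨d, hid, hdj, hSid, hSdj⟩ := hτ.apex hn hij (by omega) h1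
  have hd2 := hτ'.diag h2 (by omega) (by omega)
  have hd3 := hτ'.diag h3 (by omega) (by omega)
  set σ := τ.erase s((i : ZMod n), (j : ZMod n)) with hσdef
  have hσ : NonCrossing σ :=
    ⟨fun e he => hτ'.1 e (Finset.mem_of_mem_erase he), fun e he f hf =>
      hτ'.2 e (Finset.mem_of_mem_erase he) f (Finset.mem_of_mem_erase hf)⟩
  have hdk : s((d : ZMod n), (k : ZMod n)) ∉ σ := by
    intro h
    have h : S τ d k := Finset.mem_of_mem_erase h
    exact hτ'.nc h1 h hid hdj hjk (by omega)
  have hnew : NonCrossing (insert s((d : ZMod n), (k : ZMod n)) σ) := by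
    refine hσ.insert (by omega) (by omega) fun x y hx hx' hy hy' hxy => ?_
    have hne := Finset.ne_of_mem_erase hxy
    have hS : S τ x y := Finset.mem_of_mem_erase hxy
    -- A diagonal crossing `{d, k}` but no side of the quadrilateral `i d j k` must be `{i, j}`.
    have hxj : x = j := by
      rcases lt_trichotomy x j with h | h | h
      · rcases hSdj with h' | h'
        · omega
        · exact (hτ'.nc h' hS hx h (by omega) hy').elim
      · exact h
      · exact (hτ'.nc h2 hS h hx' hy (by omega)).elim
    subst hxj
    have hyi : y = i + n := by
      rcases lt_trichotomy y (i + n) with h | h | h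
      · exact (hτ'.nc hS h3 (by omega) hy h (by omega)).elim
      · exact h
      · rcases hSid with h' | h'
        · omega
        · exact (hτ'.nc hS h'.shift.shift (by omega) h hy' (by omega)).elim
    subst hyi
    rw [cast_add_n] at hne
    exact hne Sym2.eq_swap
  have hcard : (insert s((d : ZMod n), (k : ZMod n)) σ).card = n - 3 := by
    have hpos : 0 < τ.card := Finset.card_pos.2 ⟨_, h1⟩
    rw [Finset.card_insert_of_notMem hdk, hσdef, Finset.card_erase_of_mem h1]
    have := hτ.1
    omega
  have hlt : len p s((i : ZMod n), (j : ZMod n)) < len p s((d : ZMod n), (k : ZMod n)) := by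
    rw [len_eq hp hm hij (by omega), len_eq hp hm (by omega) (by omega)]
    have a1 := hm hid
    have a2 := hm hdj
    have a3 := lift_add_n θ i
    have := sin_half_lt (α := lift θ j - lift θ i) (t := lift θ k - lift θ d)
      (by linarith) (by linarith) (by linarith)
    linarith
  have hle := hmax _ ⟨hcard, hnew⟩
  have hτeq : τ.val.map (len p) = len p s((i : ZMod n), (j : ZMod n)) ::ₘ σ.val.map (len p) := by
    rw [← Multiset.map_cons, ← Finset.insert_val_of_notMem (Finset.notMem_erase _ _),
      Finset.insert_erase h1]
  refine not_lexLE_of_lt hlt (σ.val.map (len p)) ?_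
  unfold sortedLengths at hle
  rwa [Finset.insert_val_of_notMem hdk, Multiset.map_cons, hτeq] at hle

lemma no_inner_triangle (hn : 5 ≤ n) {θ : ZMod n → ℝ} {p : ZMod n → EuclideanSpace ℝ (Fin 2)}
    (hp : ∀ i : ZMod n, p i = pt (θ i)) (hm : StrictMono (lift θ))
    {τ : Finset (Sym2 (ZMod n))} (hτ : LengthMaximal p τ) {i j k : ℤ} (hij : i < j) (hjk : j < k)
    (hki : k < i + n) (h1 : S τ i j) (h2 : S τ j k) (h3 : S τ k (i + n)) : False := by
  have ei := lift_add_n θ i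
  have ej := lift_add_n θ j
  have ek := lift_add_n θ k
  -- The triangle is rotated so that the smallest of its three arcs comes first.
  by_cases c1 : lift θ j - lift θ i ≤ lift θ k - lift θ j ∧
      lift θ j - lift θ i ≤ lift θ (i + n) - lift θ k
  · exact no_inner_triangle_aux hn hp hm hτ hij hjk hki h1 h2 h3 c1.1 c1.2
  by_cases c2 : lift θ k - lift θ j ≤ lift θ (i + n) - lift θ k
  · refine no_inner_triangle_aux hn hp hm hτ hjk hki (by omega) h2 h3 h1.shift.shift c2 ?_
    by_contra c3
    exact c1 ⟨by linarith, by linarith⟩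
  · refine no_inner_triangle_aux hn hp hm hτ hki (by omega) (by omega) h3 h1.shift.shift
      h2.shift.shift ?_ (by linarith)
    by_contra c3
    exact c1 ⟨by linarith, by linarith⟩

theorem stmt5 {n : ℕ} [NeZero n] (hn : 5 ≤ n)
    (θ : ZMod n → ℝ)
    (hmono : ∀ i j : ZMod n, i.val < j.val → θ i < θ j)
    (hlb : ∀ i : ZMod n, 0 ≤ θ i) (hub : ∀ i : ZMod n, θ i < 2 * Real.pi)
    (p : ZMod n → EuclideanSpace ℝ (Fin 2)) (hp : ∀ i : ZMod n, p i = pt (θ i))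
    (τ : Finset (Sym2 (ZMod n))) (hτ : LengthMaximal p τ) :
    (Finset.univ.filter fun i : ZMod n => ear i ∈ τ).card = 2 := by
  exact card_ears hn hτ.1 fun i j k hij hjk hki h1 h2 h3 =>
    no_inner_triangle hn hp (lift_strictMono hmono hlb hub) hτ hij hjk hki h1 h2 h3
end

section
/- Let n ≥ 5 and let P = {p_0, …, p_{n−1}} be n distinct points on the unit circle listed in counterclockwise cyclic order, containing no symmetric quadruple. Then every length maximal triangulation τ of P contains a maximal pair of ears: there exist two distinct non-crossing ears e, e' ∈ τ such that for every pair of distinct non-crossing ears f, f' of the polygon, min(‖f‖, ‖f'‖) ≤ min(‖e‖, ‖e'‖). -/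
variable {n : ℕ} [NeZero n]

/-!
Any triangulation of a convex polygon contains two distinct ears, so it is enough to show that
every diagonal of a length maximal triangulation `τ` has length at least
`min ‖e‖ ‖f‖`, for any two distinct non-crossing ears `e`, `f`.

Given such `e = e_k`, `f = e_l`, there is a triangulation `τ'` all of whose diagonals separate the
vertices `k` and `l` (`zigzag`). A diagonal separating `k` from `l` cuts off an arc that contains
the arc under `f` and lies in the complement of the arc under `e`; since a chord over an arc `α`
has length `2 sin (α / 2)` and `sin` is concave on `[0, π]`, its length is at least
`min ‖e‖ ‖f‖` (`zigzag_len`). As `D(τ') ≤ D(τ)` lexicographically, the first entry of `D(τ)`,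
and so every entry, is at least `min ‖e‖ ‖f‖` (`le_of_lexLE`).

That a triangulation contains two ears is a counting argument. After cutting the polygon at a
vertex `r`, diagonals become pairs `a < b` of labels in `{0, …, n - 1}`. Sending `(a, b)` to the
apex of the triangle below it is injective into the interior labels, hence surjective for a
triangulation together with `(0, n - 1)`, and a pair of smallest span must then be an ear
(`exists_short`). The apex of that ear is not `r`, and applying this twice gives two ears
(`exists_ear_ne`).
-/

/-! ### Labels relative to a base vertex -/

theorem exists_label (r x : ZMod n) : ∃ a : ℕ, a < n ∧ x = r + (a : ZMod n) :=
  ⟨(x - r).val, ZMod.val_lt _, by rw [ZMod.natCast_zmod_val]; ring⟩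

theorem val_label_sub (r : ZMod n) {x y : ℕ} (hx : x < n) (hy : y < n) :
    ((r + (x : ZMod n)) - (r + (y : ZMod n))).val = if y ≤ x then x - y else n + x - y := by
  rw [add_sub_add_left_eq_sub]
  split_ifs with h
  · rw [← Nat.cast_sub h, ZMod.val_natCast, Nat.mod_eq_of_lt (by omega)]
  · have : ((x : ZMod n) - (y : ZMod n)) = ((n + x - y : ℕ) : ZMod n) := by
      rw [Nat.cast_sub (by omega)]; simp
    rw [this, ZMod.val_natCast, Nat.mod_eq_of_lt (by omega)]

theorem label_inj (r : ZMod n) {x y : ℕ} (hx : x < n) (hy : y < n)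
    (h : r + (x : ZMod n) = r + (y : ZMod n)) : x = y := by
  have h1 := add_left_cancel h
  rw [ZMod.natCast_eq_natCast_iff', Nat.mod_eq_of_lt hx, Nat.mod_eq_of_lt hy] at h1
  exact h1

theorem crosses_of_lt (r : ZMod n) {a b c d : ℕ} (h1 : a < c) (h2 : c < b) (h3 : b < d)
    (h4 : d < n) :
    Crosses s(r + (a : ZMod n), r + (b : ZMod n)) s(r + (c : ZMod n), r + (d : ZMod n)) := by
  refine ⟨_, _, _, _, rfl, rfl, ?_, ?_⟩ <;> unfold CcwBtw <;>
    rw [val_label_sub r (by omega) (by omega), val_label_sub r (by omega) (by omega)] <;>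
    split_ifs <;> omega

theorem lt_of_crosses_s6 (r : ZMod n) {a b c d : ℕ} (h1 : a < b) (h2 : b < n) (h3 : c < d)
    (h4 : d < n)
    (h : Crosses s(r + (a : ZMod n), r + (b : ZMod n)) s(r + (c : ZMod n), r + (d : ZMod n))) :
    (a < c ∧ c < b ∧ b < d) ∨ (c < a ∧ a < d ∧ d < b) := by
  have ha : a < n := by omega
  have hc : c < n := by omega
  obtain ⟨i, j, k, l, hd, he, hik, hjl⟩ := h
  unfold CcwBtw at hik hjl
  rcases Sym2.eq_iff.1 hd with ⟨rfl, rfl⟩ | ⟨rfl, rfl⟩ <;>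
    rcases Sym2.eq_iff.1 he with ⟨rfl, rfl⟩ | ⟨rfl, rfl⟩ <;>
    simp only [val_label_sub r, ha, hc, h2, h4] at hik hjl <;>
    split_ifs at hik hjl <;> omega

theorem isDiag_label (r : ZMod n) {a b : ℕ} (h1 : a + 2 ≤ b) (h2 : b < n)
    (h3 : b + 1 < n + a) : IsDiag s(r + (a : ZMod n), r + (b : ZMod n)) := by
  have key : ∀ x : ℕ, x < n → ((r + (b : ZMod n)) - (r + (a : ZMod n))) = (x : ZMod n) →
      b - a = x := by
    intro x hx h
    have := congrArg ZMod.val h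
    rw [val_label_sub r h2 (by omega), ZMod.val_natCast, Nat.mod_eq_of_lt hx,
      if_pos (by omega)] at this
    exact this
  refine ⟨_, _, rfl, fun h => ?_, fun h => ?_, fun h => ?_⟩
  · have := key (n - 1) (by omega) (by rw [h, Nat.cast_sub (by omega)]; simp)
    omega
  · have := key 0 (by omega) (by rw [h]; simp)
    omega
  · have := key 1 (by omega) (by rw [h]; simp)
    omega

theorem label_of_isDiag (r : ZMod n) {d : Sym2 (ZMod n)} (hd : IsDiag d) :
    ∃ a b : ℕ, a + 2 ≤ b ∧ b < n ∧ b + 1 < n + a ∧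
      d = s(r + (a : ZMod n), r + (b : ZMod n)) := by
  obtain ⟨i, j, rfl, h1, h2, h3⟩ := hd
  obtain ⟨a, ha, rfl⟩ := exists_label r i
  obtain ⟨b, hb, rfl⟩ := exists_label r j
  have hne : a ≠ b := by rintro rfl; exact h2 rfl
  have hab : b ≠ a + 1 := by rintro rfl; apply h3; push_cast; ring
  have hba : a ≠ b + 1 := by rintro rfl; apply h1; push_cast; ring
  have h4 : b + 1 ≠ n + a := by
    intro h
    have := congrArg (Nat.cast : ℕ → ZMod n) h
    push_cast at this
    rw [ZMod.natCast_self, zero_add] at this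
    apply h1; rw [← this]; ring
  have h5 : a + 1 ≠ n + b := by
    intro h
    have := congrArg (Nat.cast : ℕ → ZMod n) h
    push_cast at this
    rw [ZMod.natCast_self, zero_add] at this
    apply h3; rw [← this]; ring
  rcases lt_or_gt_of_ne hne with h | h
  · exact ⟨a, b, by omega, hb, by omega, rfl⟩
  · exact ⟨b, a, by omega, ha, by omega, Sym2.eq_swap⟩

/-! ### Every triangulation has two ears -/

/-- The label of the third vertex of the triangle below the pair `x = (a, b)` of the non-crossing
family `F`: the largest `c < b` such that `(a, c)` is in `F`, or `a + 1` if there is none. -/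
def apex (F : Finset (ℕ × ℕ)) (x : ℕ × ℕ) : ℕ :=
  ((Finset.Ioo x.1 x.2).filter fun c => c = x.1 + 1 ∨ (x.1, c) ∈ F).sup id

theorem apex_spec (F : Finset (ℕ × ℕ)) {x : ℕ × ℕ} (hx : x.1 + 2 ≤ x.2) :
    x.1 < apex F x ∧ apex F x < x.2 ∧ (apex F x = x.1 + 1 ∨ (x.1, apex F x) ∈ F) := by
  have hne : ((Finset.Ioo x.1 x.2).filter fun c => c = x.1 + 1 ∨ (x.1, c) ∈ F).Nonempty :=
    ⟨x.1 + 1, by simp; omega⟩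
  obtain ⟨c, hc, he⟩ := Finset.exists_mem_eq_sup _ hne id
  unfold apex
  rw [he]
  simp only [Finset.mem_filter, Finset.mem_Ioo] at hc
  exact ⟨hc.1.1, hc.1.2, hc.2⟩

theorem le_apex (F : Finset (ℕ × ℕ)) {x : ℕ × ℕ} {c : ℕ} (h1 : x.1 < c) (h2 : c < x.2)
    (h3 : (x.1, c) ∈ F) : c ≤ apex F x := by
  unfold apex
  exact Finset.le_sup (f := id) (by simp [h1, h2, h3])

/-- If `c` is the apex below `(a, b)`, a pair of a non-crossing family that is nested inside
`(a, b)` and strictly contains `c` must be `(a, b)` itself. -/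
theorem apex_nested {F : Finset (ℕ × ℕ)} (hF : ∀ x ∈ F, x.1 + 2 ≤ x.2)
    (nc : ∀ x ∈ F, ∀ y ∈ F, ¬ (x.1 < y.1 ∧ y.1 < x.2 ∧ x.2 < y.2))
    {x y : ℕ × ℕ} (hx : x ∈ F) (hy : y ∈ F) (h1 : x.1 ≤ y.1) (h2 : y.2 ≤ x.2)
    (h3 : y.1 < apex F x) (h4 : apex F x < y.2) : x = y := by
  obtain ⟨a1, a2, a3⟩ := apex_spec F (hF x hx)
  rcases h1.eq_or_lt with h | h
  · rcases h2.eq_or_lt with h' | h'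
    · exact Prod.ext h h'.symm
    · have := le_apex F (x := x) (c := y.2) (by omega) h' (by rw [h]; exact hy)
      omega
  · rcases a3 with a3 | a3
    · omega
    · exact absurd ⟨h, h3, h4⟩ (nc _ a3 _ hy)

/-- A non-crossing family of maximal size on the labels `0, …, N`, the pair `(0, N)` being
allowed, contains a pair of the form `(a, a + 2)`. -/
theorem exists_short {N : ℕ} (hN : 2 ≤ N) {F : Finset (ℕ × ℕ)}
    (hF : ∀ x ∈ F, x.1 + 2 ≤ x.2) (hFN : ∀ x ∈ F, x.2 ≤ N)
    (nc : ∀ x ∈ F, ∀ y ∈ F, ¬ (x.1 < y.1 ∧ y.1 < x.2 ∧ x.2 < y.2))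
    (hc : N - 1 ≤ F.card) : ∃ a, (a, a + 2) ∈ F := by
  have hinj : Set.InjOn (apex F) F := by
    intro x hx y hy hxy
    obtain ⟨a1, a2, -⟩ := apex_spec F (hF x hx)
    obtain ⟨b1, b2, -⟩ := apex_spec F (hF y hy)
    have n1 := nc x hx y hy
    have n2 := nc y hy x hx
    -- two pairs around a common label do not cross, so they are nested
    have : (x.1 ≤ y.1 ∧ y.2 ≤ x.2) ∨ (y.1 ≤ x.1 ∧ x.2 ≤ y.2) := by omega
    rcases this with h | h
    · exact apex_nested hF nc hx hy h.1 h.2 (by omega) (by omega)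
    · exact (apex_nested hF nc hy hx h.1 h.2 (by omega) (by omega)).symm
  have hmaps : Set.MapsTo (apex F) F (Finset.Ioo 0 N : Finset ℕ) := by
    intro x hx
    obtain ⟨a1, a2, -⟩ := apex_spec F (hF x hx)
    have := hFN x hx
    simp only [Finset.coe_Ioo, Set.mem_Ioo]
    omega
  have hsurj : Set.SurjOn (apex F) F (Finset.Ioo 0 N : Finset ℕ) :=
    Finset.surjOn_of_injOn_of_card_le _ hmaps hinj (by simp; omega)
  have hne : F.Nonempty := Finset.card_pos.1 (by omega)
  obtain ⟨x, hx, hmin⟩ := Finset.exists_min_image F (fun x => x.2 - x.1) hne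
  have hx2 := hF x hx
  have hxN := hFN x hx
  by_cases hshort : x.2 = x.1 + 2
  · exact ⟨x.1, by rw [← hshort]; exact hx⟩
  exfalso
  have hmem : x.1 + 2 ∈ ((Finset.Ioo 0 N : Finset ℕ) : Set ℕ) := by
    simp only [Finset.coe_Ioo, Set.mem_Ioo]
    omega
  obtain ⟨y, hy, hyx⟩ := hsurj hmem
  rw [Finset.mem_coe] at hy
  have hy2 := hF y hy
  have hm := hmin y hy
  obtain ⟨b1, b2, -⟩ := apex_spec F hy2
  have n1 := nc x hx y hy
  have n2 := nc y hy x hx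
  have hyx' : y = x := apex_nested hF nc hy hx (by omega) (by omega) (by omega) (by omega)
  subst hyx'
  -- since its apex is `a + 2`, the minimal pair `(a, b)` lies above a smaller pair `(a, a + 2)`
  rcases (apex_spec F hy2).2.2 with h | h
  · omega
  · have := hmin _ h
    simp only at this
    omega

theorem exists_ear_ne (hn : 5 ≤ n) {τ : Finset (Sym2 (ZMod n))} (hτ : IsTriangulation τ)
    (r : ZMod n) : ∃ j : ZMod n, ear j ∈ τ ∧ j ≠ r := by
  classical
  obtain ⟨hcard, hdiag, hnc⟩ := hτ
  set f : ℕ × ℕ → Sym2 (ZMod n) := fun x => s(r + (x.1 : ZMod n), r + (x.2 : ZMod n)) with hf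
  set F₀ : Finset (ℕ × ℕ) := (Finset.range n ×ˢ Finset.range n).filter
    fun x => x.1 + 2 ≤ x.2 ∧ x.2 + 1 < n + x.1 ∧ f x ∈ τ with hF₀
  have hmem : ∀ x, x ∈ F₀ ↔ x.1 + 2 ≤ x.2 ∧ x.2 < n ∧ x.2 + 1 < n + x.1 ∧ f x ∈ τ := by
    intro x
    simp only [hF₀, Finset.mem_filter, Finset.mem_product, Finset.mem_range]
    constructor
    · rintro ⟨⟨h1, h2⟩, h3, h4, h5⟩; exact ⟨h3, h2, h4, h5⟩
    · rintro ⟨h3, h2, h4, h5⟩; exact ⟨⟨by omega, h2⟩, h3, h4, h5⟩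
  have hle : τ.card ≤ F₀.card := by
    refine Finset.card_le_card_of_surjOn f ?_
    intro d hd
    obtain ⟨a, b, h1, h2, h3, rfl⟩ := label_of_isDiag r (hdiag d hd)
    exact ⟨(a, b), (hmem _).2 ⟨h1, h2, h3, hd⟩, rfl⟩
  have hnot : ((0, n - 1) : ℕ × ℕ) ∉ F₀ := by
    intro h
    have := (hmem _).1 h
    simp only at this
    omega
  obtain ⟨a, ha⟩ := exists_short (N := n - 1) (F := insert (0, n - 1) F₀) (by omega)
    (by
      intro x hx
      rcases Finset.mem_insert.1 hx with rfl | hx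
      · simp only; omega
      · exact ((hmem x).1 hx).1)
    (by
      intro x hx
      rcases Finset.mem_insert.1 hx with rfl | hx
      · simp only; omega
      · have := (hmem x).1 hx
        omega)
    (by
      rintro x hx y hy ⟨h1, h2, h3⟩
      rcases Finset.mem_insert.1 hx with rfl | hx
      · rcases Finset.mem_insert.1 hy with rfl | hy
        · simp at h1
        · have := (hmem y).1 hy
          simp only at h3
          omega
      · rcases Finset.mem_insert.1 hy with rfl | hy
        · simp at h1
        · have hx' := (hmem x).1 hx
          have hy' := (hmem y).1 hy
          exact hnc _ hx'.2.2.2 _ hy'.2.2.2 (crosses_of_lt r h1 h2 h3 hy'.2.1))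
    (by rw [Finset.card_insert_of_notMem hnot]; omega)
  rcases Finset.mem_insert.1 ha with h | h
  · simp only [Prod.mk.injEq] at h
    omega
  · have h' := (hmem _).1 h
    simp only at h'
    refine ⟨r + ((a + 1 : ℕ) : ZMod n), ?_, ?_⟩
    · have e : ear (r + ((a + 1 : ℕ) : ZMod n)) = f (a, a + 2) := by
        simp only [ear, hf]
        exact Sym2.eq_iff.2 (Or.inl ⟨by push_cast; ring, by push_cast; ring⟩)
      rw [e]; exact h'.2.2.2
    · intro he
      have := label_inj r (x := a + 1) (y := 0) (by omega) (by omega) (by rw [he]; simp)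
      omega

/-! ### A triangulation whose diagonals all separate two given vertices -/

/-- The diagonals, in labels relative to a base vertex `0`, of a triangulation whose only ears are
at the labels `0` and `m`: a fan at `1` followed by a fan at `m + 1`. -/
def zigLabels (n m : ℕ) : Finset (ℕ × ℕ) :=
  ({1} ×ˢ Finset.Icc (m + 1) (n - 1)) ∪ (Finset.Icc 2 (m - 1) ×ˢ {m + 1})

theorem mem_zigLabels {m : ℕ} {x : ℕ × ℕ} : x ∈ zigLabels n m ↔
    (x.1 = 1 ∧ m + 1 ≤ x.2 ∧ x.2 ≤ n - 1) ∨ (2 ≤ x.1 ∧ x.1 ≤ m - 1 ∧ x.2 = m + 1) := by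
  simp only [zigLabels, Finset.mem_union, Finset.mem_product, Finset.mem_singleton,
    Finset.mem_Icc]
  tauto

theorem zigzag (r : ZMod n) {m : ℕ} (h2 : 2 ≤ m) (hm : m + 2 ≤ n) :
    ∃ τ' : Finset (Sym2 (ZMod n)), IsTriangulation τ' ∧
      ∀ d ∈ τ', ∃ a b : ℕ, 1 ≤ a ∧ a + 1 ≤ m ∧ m + 1 ≤ b ∧ b < n ∧
        d = s(r + (a : ZMod n), r + (b : ZMod n)) := by
  classical
  refine ⟨(zigLabels n m).image fun x => s(r + (x.1 : ZMod n), r + (x.2 : ZMod n)),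
    ⟨?_, ?_, ?_⟩, ?_⟩
  · rw [Finset.card_image_of_injOn]
    · rw [zigLabels, Finset.card_union_of_disjoint]
      · simp; omega
      · rw [Finset.disjoint_left]
        intro x hx hy
        simp only [Finset.mem_product, Finset.mem_singleton, Finset.mem_Icc] at hx hy
        omega
    · intro x hx y hy hxy
      have hx := mem_zigLabels.1 (Finset.mem_coe.1 hx)
      have hy := mem_zigLabels.1 (Finset.mem_coe.1 hy)
      rcases Sym2.eq_iff.1 hxy with ⟨h, h'⟩ | ⟨h, h'⟩
      · exact Prod.ext (label_inj r (by omega) (by omega) h)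
          (label_inj r (by omega) (by omega) h')
      · have e1 := label_inj r (by omega) (by omega) h
        have e2 := label_inj r (by omega) (by omega) h'
        omega
  · intro d hd
    obtain ⟨x, hx, rfl⟩ := Finset.mem_image.1 hd
    have hx := mem_zigLabels.1 hx
    exact isDiag_label r (by omega) (by omega) (by omega)
  · intro d hd e he hcr
    obtain ⟨x, hx, rfl⟩ := Finset.mem_image.1 hd
    obtain ⟨y, hy, rfl⟩ := Finset.mem_image.1 he
    have hx := mem_zigLabels.1 hx
    have hy := mem_zigLabels.1 hy
    have := lt_of_crosses_s6 r (by omega) (by omega) (by omega) (by omega) hcr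
    omega
  · intro d hd
    obtain ⟨x, hx, rfl⟩ := Finset.mem_image.1 hd
    have hx := mem_zigLabels.1 hx
    exact ⟨x.1, x.2, by omega, by omega, by omega, by omega, rfl⟩

/-! ### Lengths of chords of the circle -/

theorem norm_pt_sub_s6 (α β : ℝ) (h1 : α ≤ β) (h2 : β - α ≤ 2 * Real.pi) :
    ‖pt α - pt β‖ = 2 * Real.sin ((β - α) / 2) := by
  have hs : 0 ≤ Real.sin ((β - α) / 2) :=
    Real.sin_nonneg_of_nonneg_of_le_pi (by linarith) (by linarith)
  rw [EuclideanSpace.norm_eq, Real.sqrt_eq_iff_mul_self_eq (by positivity) (by positivity)]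
  simp only [pt, Fin.sum_univ_two, Real.norm_eq_abs, sq_abs]
  simp
  have e1 : Real.cos (β - α) = 1 - 2 * Real.sin ((β - α) / 2) ^ 2 := by
    have : β - α = 2 * ((β - α) / 2) := by ring
    rw [this, Real.cos_two_mul, Real.cos_sq']
    ring_nf
  rw [Real.cos_sub] at e1
  nlinarith [Real.sin_sq_add_cos_sq α, Real.sin_sq_add_cos_sq β]

theorem pt_add_two_pi (α : ℝ) : pt (α + 2 * Real.pi) = pt α := by
  simp [pt]

/-- Angles of the vertices, lifted so as to increase along the labels relative to `r`. -/
theorem exists_lift_s6 (θ : ZMod n → ℝ)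
    (hmono : ∀ i j : ZMod n, i.val < j.val → θ i < θ j)
    (hlb : ∀ i : ZMod n, 0 ≤ θ i) (hub : ∀ i : ZMod n, θ i < 2 * Real.pi) (r : ZMod n) :
    ∃ φ : ℕ → ℝ, (∀ a b, a < b → b < n → φ a < φ b ∧ φ b - φ a < 2 * Real.pi) ∧
      ∀ a, pt (φ a) = pt (θ (r + (a : ZMod n))) := by
  have hr := ZMod.val_lt r
  have hval : ∀ a : ℕ, a < n → (r + (a : ZMod n)).val =
      if r.val + a < n then r.val + a else r.val + a - n := by
    intro a ha
    rw [ZMod.val_add, ZMod.val_natCast, Nat.mod_eq_of_lt ha]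
    split_ifs with h
    · exact Nat.mod_eq_of_lt h
    · rw [Nat.mod_eq_sub_mod (by omega), Nat.mod_eq_of_lt (by omega)]
  refine ⟨fun a => if r.val + a < n then θ (r + (a : ZMod n))
    else θ (r + (a : ZMod n)) + 2 * Real.pi, ?_, ?_⟩
  · intro a b hab hb
    have va := hval a (by omega)
    have vb := hval b hb
    have la := hlb (r + (a : ZMod n))
    have ua := hub (r + (a : ZMod n))
    have lb := hlb (r + (b : ZMod n))
    have ub := hub (r + (b : ZMod n))
    simp only
    by_cases ca : r.val + a < n <;> by_cases cb : r.val + b < n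
    · rw [if_pos ca] at va ⊢
      rw [if_pos cb] at vb ⊢
      have := hmono (r + (a : ZMod n)) (r + (b : ZMod n)) (by omega)
      constructor <;> linarith
    · rw [if_pos ca] at va ⊢
      rw [if_neg cb] at vb ⊢
      have := hmono (r + (b : ZMod n)) (r + (a : ZMod n)) (by omega)
      constructor <;> linarith
    · omega
    · rw [if_neg ca] at va ⊢
      rw [if_neg cb] at vb ⊢
      have := hmono (r + (a : ZMod n)) (r + (b : ZMod n)) (by omega)
      constructor <;> linarith
  · intro a
    simp only
    split_ifs
    · rfl
    · exact pt_add_two_pi _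

/-- A diagonal separating the vertices `r` and `r + m` is at least as long as the shorter of the
ears at these vertices. -/
theorem zigzag_len (θ : ZMod n → ℝ)
    (hmono : ∀ i j : ZMod n, i.val < j.val → θ i < θ j)
    (hlb : ∀ i : ZMod n, 0 ≤ θ i) (hub : ∀ i : ZMod n, θ i < 2 * Real.pi)
    (p : ZMod n → EuclideanSpace ℝ (Fin 2)) (hp : ∀ i : ZMod n, p i = pt (θ i))
    (r : ZMod n) {m a b : ℕ} (ha : 1 ≤ a) (ham : a + 1 ≤ m) (hmb : m + 1 ≤ b) (hb : b < n) :
    min (len p (ear r)) (len p (ear (r + (m : ZMod n)))) ≤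
      len p s(r + (a : ZMod n), r + (b : ZMod n)) := by
  obtain ⟨φ, hφ, hpt⟩ := exists_lift_s6 θ hmono hlb hub r
  have hlen : ∀ a b : ℕ, a < b → b < n →
      len p s(r + (a : ZMod n), r + (b : ZMod n)) = 2 * Real.sin ((φ b - φ a) / 2) := by
    intro a b hab hb
    have := hφ a b hab hb
    rw [← norm_pt_sub_s6 _ _ this.1.le this.2.le, hpt, hpt, ← hp, ← hp]
    rfl
  have hmle : ∀ a b : ℕ, a ≤ b → b < n → φ a ≤ φ b := by
    intro a b hab hb
    rcases hab.eq_or_lt with rfl | h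
    · exact le_rfl
    · exact (hφ a b h hb).1.le
  have e1 : ear r = s(r + ((1 : ℕ) : ZMod n), r + ((n - 1 : ℕ) : ZMod n)) := by
    rw [ear, Sym2.eq_swap, Nat.cast_sub (by omega)]
    simp [sub_eq_add_neg]
  have e2 : ear (r + (m : ZMod n)) =
      s(r + ((m - 1 : ℕ) : ZMod n), r + ((m + 1 : ℕ) : ZMod n)) := by
    rw [ear, Nat.cast_sub (by omega)]
    push_cast
    rw [add_sub_assoc, add_assoc]
  rw [e1, e2, hlen 1 (n - 1) (by omega) (by omega), hlen (m - 1) (m + 1) (by omega) (by omega),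
    hlen a b (by omega) hb]
  have f1 := hφ 1 (n - 1) (by omega) (by omega)
  have f2 := hφ (m - 1) (m + 1) (by omega) (by omega)
  have g1 := hmle 1 a ha (by omega)
  have g2 := hmle a (m - 1) (by omega) (by omega)
  have g3 := hmle (m + 1) b hmb hb
  have g4 := hmle b (n - 1) (by omega) (by omega)
  have hc := strictConcaveOn_sin_Icc.concaveOn.min_le_of_mem_Icc
    (x := (φ (m + 1) - φ (m - 1)) / 2) (y := (φ (n - 1) - φ 1) / 2) (z := (φ b - φ a) / 2)
    ⟨by linarith, by linarith⟩ ⟨by linarith, by linarith⟩ ⟨by linarith, by linarith⟩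
  rcases min_le_iff.1 hc with h | h
  · exact min_le_iff.2 (Or.inr (by linarith))
  · exact min_le_iff.2 (Or.inl (by linarith))

/-! ### Comparison of sorted lists -/

/-- For sorted lists of equal length, a lower bound for a list is a lower bound for every
lexicographically greater one, since it bounds the first entry. -/
theorem le_of_lexLE {l' l : List ℝ} {c : ℝ} (hlen : l'.length = l.length)
    (hs : l.Pairwise (· ≤ ·)) (hle : lexLE l' l) (hc : ∀ x ∈ l', c ≤ x) : ∀ x ∈ l, c ≤ x := by
  rcases hle with rfl | hlex
  · exact hc
  cases l with
  | nil => simp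
  | cons x xs =>
    cases l' with
    | nil => simp at hlen
    | cons y ys =>
      have hyx : y ≤ x := by
        cases hlex with
        | rel h => exact h.le
        | cons _ => exact le_rfl
      have hcx : c ≤ x := (hc y (by simp)).trans hyx
      intro z hz
      rcases List.mem_cons.1 hz with rfl | hz
      · exact hcx
      · exact hcx.trans ((List.pairwise_cons.1 hs).1 z hz)

theorem len_ge_of_lengthMaximal {p : ZMod n → EuclideanSpace ℝ (Fin 2)}
    {τ τ' : Finset (Sym2 (ZMod n))} (hτ : LengthMaximal p τ) (hτ' : IsTriangulation τ') {c : ℝ}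
    (hc : ∀ d ∈ τ', c ≤ len p d) : ∀ d ∈ τ, c ≤ len p d := by
  intro d hd
  refine le_of_lexLE (l' := sortedLengths p τ') (l := sortedLengths p τ) ?_ ?_ (hτ.2 τ' hτ') ?_
    (len p d) ?_
  · simp [sortedLengths, hτ.1.1, hτ'.1]
  · exact Multiset.pairwise_sort _ _
  · intro x hx
    simp only [sortedLengths, Multiset.mem_sort, Multiset.mem_map, Finset.mem_val] at hx
    obtain ⟨e, he, rfl⟩ := hx
    exact hc e he
  · simp only [sortedLengths, Multiset.mem_sort, Multiset.mem_map, Finset.mem_val]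
    exact ⟨d, hd, rfl⟩

theorem ear_injective (hn : 5 ≤ n) {i j : ZMod n} (h : ear i = ear j) : i = j := by
  rcases Sym2.eq_iff.1 h with ⟨h1, -⟩ | ⟨h1, h2⟩
  · exact sub_left_injective h1
  · -- `j = i - 2` and `j = i + 2` would give `n ∣ 4`
    have h4 : ((4 : ℕ) : ZMod n) = ((0 : ℕ) : ZMod n) := by
      push_cast
      linear_combination h2 - h1
    rw [ZMod.natCast_eq_natCast_iff', Nat.mod_eq_of_lt (by omega)] at h4
    simp at h4

theorem crosses_ear_add_one (hn : 5 ≤ n) (i : ZMod n) : Crosses (ear i) (ear (i + 1)) := by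
  have := crosses_of_lt (i - 1) (a := 0) (b := 2) (c := 1) (d := 3) (by omega) (by omega)
    (by omega) (by omega)
  convert this using 1 <;> rw [ear] <;>
    exact Sym2.eq_iff.2 (Or.inl ⟨by push_cast; ring, by push_cast; ring⟩)

theorem crosses_ear_sub_one (hn : 5 ≤ n) (i : ZMod n) : Crosses (ear (i + 1)) (ear i) := by
  refine ⟨i - 1 + ((1 : ℕ) : ZMod n), i - 1 + ((3 : ℕ) : ZMod n), i - 1 + ((2 : ℕ) : ZMod n),
    i - 1 + ((0 : ℕ) : ZMod n), ?_, ?_, ?_, ?_⟩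
  · exact Sym2.eq_iff.2 (Or.inl ⟨by push_cast; ring, by push_cast; ring⟩)
  · exact Sym2.eq_iff.2 (Or.inr ⟨by push_cast; ring, by push_cast; ring⟩)
  all_goals
    unfold CcwBtw
    rw [val_label_sub _ (by omega) (by omega), val_label_sub _ (by omega) (by omega)]
    split_ifs <;> omega

theorem stmt6 {n : ℕ} [NeZero n] (hn : 5 ≤ n)
    (θ : ZMod n → ℝ)
    (hmono : ∀ i j : ZMod n, i.val < j.val → θ i < θ j)
    (hlb : ∀ i : ZMod n, 0 ≤ θ i) (hub : ∀ i : ZMod n, θ i < 2 * Real.pi)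
    (p : ZMod n → EuclideanSpace ℝ (Fin 2)) (hp : ∀ i : ZMod n, p i = pt (θ i))
    (hsym : ¬ HasSymQuad p)
    (τ : Finset (Sym2 (ZMod n))) (hτ : LengthMaximal p τ) :
    ∃ i j : ZMod n, ear i ∈ τ ∧ ear j ∈ τ ∧ ear i ≠ ear j ∧
      ¬ Crosses (ear i) (ear j) ∧
      ∀ k l : ZMod n, ear k ≠ ear l → ¬ Crosses (ear k) (ear l) →
        min (len p (ear k)) (len p (ear l)) ≤ min (len p (ear i)) (len p (ear j)) := by
  obtain ⟨i, hi, -⟩ := exists_ear_ne hn hτ.1 0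
  obtain ⟨j, hj, hji⟩ := exists_ear_ne hn hτ.1 i
  refine ⟨i, j, hi, hj, fun h => hji (ear_injective hn h).symm, hτ.1.2.2 _ hi _ hj, ?_⟩
  intro k l hkl hcr
  obtain ⟨m, hm, rfl⟩ := exists_label k l
  -- the ears at `k` and `k + m` do not cross, so `k` and `k + m` are not adjacent
  have m0 : m ≠ 0 := by
    rintro rfl; apply hkl; simp
  have m1 : m ≠ 1 := by
    rintro rfl; apply hcr; simpa using crosses_ear_add_one hn k
  have m2 : m + 1 ≠ n := by
    intro h
    apply hcr
    have e : k = (k + (m : ZMod n)) + 1 := by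
      have : ((m + 1 : ℕ) : ZMod n) = 0 := by rw [h]; exact ZMod.natCast_self n
      push_cast at this
      linear_combination -this
    have := crosses_ear_sub_one hn (k + (m : ZMod n))
    rwa [← e] at this
  obtain ⟨τ', hτ', hsep⟩ := zigzag k (m := m) (by omega) (by omega)
  have hall := len_ge_of_lengthMaximal hτ hτ'
    (c := min (len p (ear k)) (len p (ear (k + (m : ZMod n))))) (by
      intro d hd
      obtain ⟨a, b, h1, h2, h3, h4, rfl⟩ := hsep d hd
      exact zigzag_len θ hmono hlb hub p hp k h1 h2 h3 h4)
  exact le_min (hall _ hi) (hall _ hj)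
end
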